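/- arXiv:1911.10499 — 2 statements merged into one kernel-verified Lean document; each statement's English description precedes it below -/
import Mathlib

section
/- Let Q be a privacy protocol all of whose entries are positive and whose rank is a, and let μ be a Borel probability measure on the simplex 𝒫 having a continuous density f, with p ↦ log det D_p μ-integrable. Then liminf_{n→∞} n · MSE^distr_{μ,n}(Q,Π_opt,n) ≥ (a/(2πe)) · e^{(2/(a−1))·γ_μ(Q)}. -/
/-!
The bound is a Bayesian Cramér–Rao (van Trees) inequality followed by Jensen's inequality.

Let `V_p = D_p⁻¹ - p pᵀ` (`Vmat`). It is positive semidefinite, its rows are tangent to the simplex,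
and `V D V = V`, so that it is the Cramér–Rao matrix of one observation. In the affine chart of the
simplex consider the vector fields `φ V_{x,·}`, where `φ` is a `C¹` function with `|φ| ≤ f` whose
support is compactly contained in the region where the density `f` is positive. Integrating the
divergence of `(p_x - T_x(y)) L_y φ V_{x,·}` by parts gives `∫ φ V_{x,x}` up to sign, whatever the
estimator `T`. Weighted AM–GM, with the second moment of the i.i.d. score computed from
`V D V = V`, yields
`2 ∫ φ tr V ≤ n · MSE(T) + ∫ f tr V + O(1/n)`.
Letting `n → ∞` and then `φ → f`, the limit inferior of `n · MSE` is at least `∫ tr V_p dμ(p)`.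

AM–GM for the eigenvalues of `V_p + c · 𝟙𝟙ᵀ`, for the optimal `c`, gives
`tr V_p ≥ a · (det D_p)^{-1/(a-1)}`, and Jensen's inequality for the exponential turns the integral
of the right-hand side into the stated constant.

The limit inferior is taken in `ℝ`, so `n · MSE` must also be shown to be bounded above. The
posterior mean minimises the mean squared error, and the unbiased estimator that averages a left
inverse of `Q` over the observations has risk `O(1/n)`.
-/

open MeasureTheory Matrix Finset Filter Real

noncomputable section

/-- The probability simplex in `ℝ^a`. -/
def simplex (a : ℕ) : Set (Fin a → ℝ) :=
  {p | (∀ x, 0 ≤ p x) ∧ ∑ x, p x = 1}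

/-- Likelihood `L_y(p) = ∏ i, (Qp)_{y i}`. -/
def lik {a b n : ℕ} (Q : Matrix (Fin b) (Fin a) ℝ) (y : Fin n → Fin b)
    (p : Fin a → ℝ) : ℝ :=
  ∏ i, Q.mulVec p (y i)

/-- Mean squared error for distribution estimation. -/
def MSEdistr {a b n : ℕ} (Q : Matrix (Fin b) (Fin a) ℝ) (μ : Measure (Fin a → ℝ))
    (Est : (Fin n → Fin b) → (Fin a → ℝ)) : ℝ :=
  ∑ y : (Fin n → Fin b), ∫ p, (∑ x, (p x - Est y x) ^ 2) * lik Q y p ∂μ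

/-- The posterior-mean estimator for distribution estimation. -/
def PiOpt {a b n : ℕ} (Q : Matrix (Fin b) (Fin a) ℝ) (μ : Measure (Fin a → ℝ))
    (y : Fin n → Fin b) : Fin a → ℝ :=
  fun x => (∫ p, p x * lik Q y p ∂μ) / (∫ p, lik Q y p ∂μ)

/-- Empirical frequency vector of a data vector. -/
def freqVec {a n : ℕ} (xv : Fin n → Fin a) : Fin a → ℝ :=
  fun α => ((Finset.univ.filter fun i => xv i = α).card : ℝ) / n

/-- Joint weight `w(x⃗,y⃗) = ∫ ∏ i, p_{x_i} Q_{y_i|x_i} dμ(p)`. -/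
def wgt {a b n : ℕ} (Q : Matrix (Fin b) (Fin a) ℝ) (μ : Measure (Fin a → ℝ))
    (xv : Fin n → Fin a) (y : Fin n → Fin b) : ℝ :=
  ∫ p, (∏ i, p (xv i) * Q (y i) (xv i)) ∂μ

/-- Mean squared error for frequency estimation. -/
def MSEfreq {a b n : ℕ} (Q : Matrix (Fin b) (Fin a) ℝ) (μ : Measure (Fin a → ℝ))
    (Est : (Fin n → Fin b) → (Fin a → ℝ)) : ℝ :=
  ∑ xv : (Fin n → Fin a), ∑ y : (Fin n → Fin b),
    wgt Q μ xv y * ∑ α, (freqVec xv α - Est y α) ^ 2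

/-- The posterior-mean estimator for frequency estimation. -/
def PhiOpt {a b n : ℕ} (Q : Matrix (Fin b) (Fin a) ℝ) (μ : Measure (Fin a → ℝ))
    (y : Fin n → Fin b) : Fin a → ℝ :=
  fun α => (∑ xv : (Fin n → Fin a), wgt Q μ xv y * freqVec xv α) /
    (∑ xv : (Fin n → Fin a), wgt Q μ xv y)

/-- `P(φ, y⃗) = ∑_{x⃗ : F(x⃗) = φ} w(x⃗, y⃗)`. -/
def Pphi {a b n : ℕ} (Q : Matrix (Fin b) (Fin a) ℝ) (μ : Measure (Fin a → ℝ))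
    (φ : Fin a → ℝ) (y : Fin n → Fin b) : ℝ := by
  classical
  exact ∑ xv ∈ Finset.univ.filter (fun xv : Fin n → Fin a => freqVec xv = φ), wgt Q μ xv y

/-- Conditional Shannon entropy `H_n(F | Y⃗)` (terms with zero probability vanish since
`Real.log 0 = 0`). -/
def HFcond {a b : ℕ} (Q : Matrix (Fin b) (Fin a) ℝ) (μ : Measure (Fin a → ℝ))
    (n : ℕ) : ℝ := by
  classical
  exact -(∑ y : (Fin n → Fin b), ∑ φ ∈ Finset.image (freqVec (a := a) (n := n)) Finset.univ,
      Pphi Q μ φ y * Real.log (Pphi Q μ φ y /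
        ∑ φ' ∈ Finset.image (freqVec (a := a) (n := n)) Finset.univ, Pphi Q μ φ' y))

/-- The set `Δ = {q ∈ ℝ^m : q ≥ 0, ∑ q ≤ 1}`. -/
def stdCorner (m : ℕ) : Set (Fin m → ℝ) :=
  {q | (∀ i, 0 ≤ q i) ∧ ∑ i, q i ≤ 1}

/-- The identification `Δ ⊂ ℝ^{a-1} → 𝒫 ⊂ ℝ^a`,
`q ↦ (q_1, …, q_{a-1}, 1 - ∑ q_i)`. -/
def emb (a : ℕ) (q : Fin (a - 1) → ℝ) : Fin a → ℝ :=
  fun x => if h : (x : ℕ) < a - 1 then q ⟨x.1, h⟩ else 1 - ∑ i, q i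

/-- `μ` has density `f` (w.r.t. Lebesgue measure on `Δ`). -/
def IsDensity {a : ℕ} (μ : Measure (Fin a → ℝ)) (f : (Fin (a - 1) → ℝ) → ℝ) : Prop :=
  Measurable f ∧ (∀ q, 0 ≤ f q) ∧ (∫ q in stdCorner (a - 1), f q) = 1 ∧
  ∀ g : (Fin a → ℝ) → ℝ, Measurable g → (∃ C, ∀ p, |g p| ≤ C) →
    (∫ p, g p ∂μ) = ∫ q in stdCorner (a - 1), g (emb a q) * f q

/-- `μ` has continuous density `f`. -/
def IsContDensity {a : ℕ} (μ : Measure (Fin a → ℝ)) (f : (Fin (a - 1) → ℝ) → ℝ) : Prop :=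
  ContinuousOn f (stdCorner (a - 1)) ∧ (∀ q, 0 ≤ f q) ∧
  (∫ q in stdCorner (a - 1), f q) = 1 ∧
  ∀ g : (Fin a → ℝ) → ℝ, Measurable g → (∃ C, ∀ p, |g p| ≤ C) →
    (∫ p, g p ∂μ) = ∫ q in stdCorner (a - 1), g (emb a q) * f q

/-- Normalisation constant `C_{y⃗} = ∫_Δ f(q) L_{y⃗}(p(q)) dλ(q)`. -/
def Cw {a b n : ℕ} (Q : Matrix (Fin b) (Fin a) ℝ) (f : (Fin (a - 1) → ℝ) → ℝ)
    (y : Fin n → Fin b) : ℝ :=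
  ∫ q in stdCorner (a - 1), f q * lik Q y (emb a q)

/-- Posterior density `g_{y⃗}(q) = f(q) L_{y⃗}(p(q)) / C_{y⃗}`. -/
def gpost {a b n : ℕ} (Q : Matrix (Fin b) (Fin a) ℝ) (f : (Fin (a - 1) → ℝ) → ℝ)
    (y : Fin n → Fin b) (q : Fin (a - 1) → ℝ) : ℝ :=
  f q * lik Q y (emb a q) / Cw Q f y

/-- Conditional differential entropy `h_n(P | Y⃗)`. -/
def hCond {a b : ℕ} (Q : Matrix (Fin b) (Fin a) ℝ) (f : (Fin (a - 1) → ℝ) → ℝ)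
    (n : ℕ) : ℝ :=
  ∑ y : (Fin n → Fin b),
    Cw Q f y * (-(∫ q in stdCorner (a - 1), gpost Q f y q * Real.log (gpost Q f y q)))

/-- The matrix `D_p = Qᵀ · diag(Qp)⁻¹ · Q`. -/
def Dmat {a b : ℕ} (Q : Matrix (Fin b) (Fin a) ℝ) (p : Fin a → ℝ) :
    Matrix (Fin a) (Fin a) ℝ :=
  Qᵀ * Matrix.diagonal (fun y => (Q.mulVec p y)⁻¹) * Q

/-- The constant `γ_μ(Q)`. -/
def gammaMu {a b : ℕ} (Q : Matrix (Fin b) (Fin a) ℝ) (μ : Measure (Fin a → ℝ)) : ℝ :=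
  (((a : ℝ) - 1) / 2) * Real.log (2 * π * Real.exp 1) -
    (1 / 2) * ∫ p, Real.log (Dmat Q p).det ∂μ

/-- The truncated column `w_x = (Q_{1|x}, …, Q_{b-1|x})`. -/
def wcol {a b : ℕ} (Q : Matrix (Fin b) (Fin a) ℝ) (x : Fin a) : Fin (b - 1) → ℝ :=
  fun y => Q ⟨y.1, lt_of_lt_of_le y.2 (Nat.sub_le b 1)⟩ x

/-- The matrix `E_x = diag(w_x) - w_x w_xᵀ`. -/
def Emat {a b : ℕ} (Q : Matrix (Fin b) (Fin a) ℝ) (x : Fin a) :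
    Matrix (Fin (b - 1)) (Fin (b - 1)) ℝ :=
  Matrix.diagonal (wcol Q x) - Matrix.vecMulVec (wcol Q x) (wcol Q x)

/-- The matrix `G_p = ∑ x, p_x E_x`. -/
def Gmat {a b : ℕ} (Q : Matrix (Fin b) (Fin a) ℝ) (p : Fin a → ℝ) :
    Matrix (Fin (b - 1)) (Fin (b - 1)) ℝ :=
  ∑ x, p x • Emat Q x

/-- The constant `δ_μ(Q)`. -/
def deltaMu {a b : ℕ} (Q : Matrix (Fin b) (Fin a) ℝ) (μ : Measure (Fin a → ℝ)) : ℝ :=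
  gammaMu Q μ +
    (1 / 2) * ∫ p, (Real.log (Gmat Q p).det - ∑ y, Real.log (Q.mulVec p y)) ∂μ

/-- `Q` satisfies `ε`-local differential privacy. -/
def SatisfiesLDP {a b : ℕ} (Q : Matrix (Fin b) (Fin a) ℝ) (ε : ℝ) : Prop :=
  ∀ x x' : Fin a, ∀ y : Fin b, Q y x' ≤ Real.exp ε * Q y x

section LinearAlgebra

variable {ι : Type*} [Fintype ι]

theorem det_le_trace_div_card_pow [DecidableEq ι] [Nonempty ι] {A : Matrix ι ι ℝ}
    (hA : A.PosSemidef) : A.det ≤ (A.trace / Fintype.card ι) ^ Fintype.card ι := by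
  have hcard : (0 : ℝ) < Fintype.card ι := by exact_mod_cast Fintype.card_pos
  have amgm := Real.geom_mean_le_arith_mean univ (fun _ => 1) hA.1.eigenvalues
    (fun _ _ => zero_le_one) (by simpa using hcard) fun i _ => hA.eigenvalues_nonneg i
  simp only [rpow_one, sum_const, card_univ, nsmul_eq_mul, mul_one, one_mul] at amgm
  have hprod : 0 ≤ ∏ i, hA.1.eigenvalues i := prod_nonneg fun i _ => hA.eigenvalues_nonneg i
  rw [hA.1.det_eq_prod_eigenvalues, hA.1.trace_eq_sum_eigenvalues]
  simp only [RCLike.ofReal_real_eq_id, id]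
  rwa [Real.rpow_inv_le_iff_of_pos hprod (div_nonneg (sum_nonneg fun i _ =>
    hA.eigenvalues_nonneg i) hcard.le) hcard, rpow_natCast] at amgm

theorem sub_vecMulVec_mulVec_add_vecMulVec [DecidableEq ι] {S : Matrix ι ι ℝ}
    (hS : S.IsHermitian) {u : ι → ℝ} (hu : u ⬝ᵥ S *ᵥ u = 1) (w : ι → ℝ) :
    S - vecMulVec (S *ᵥ u) (S *ᵥ u) + vecMulVec w w =
      (1 + vecMulVec (w - S *ᵥ u) u) * S * (1 + vecMulVec (w - S *ᵥ u) u)ᵀ := by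
  have hvec : u ᵥ* S = S *ᵥ u := by
    rw [← mulVec_transpose, ← conjTranspose_eq_transpose_of_trivial, hS.eq]
  have hu' : S *ᵥ u ⬝ᵥ u = 1 := by rw [dotProduct_comm, hu]
  obtain ⟨v, rfl⟩ : ∃ v, w = v + S *ᵥ u := ⟨w - S *ᵥ u, by simp⟩
  simp only [add_sub_cancel_right, transpose_add, transpose_one, transpose_vecMulVec, add_mul,
    one_mul, mul_add, mul_one, vecMulVec_mul, mul_vecMulVec, vecMulVec_mulVec, hvec,
    hu', MulOpposite.op_one, one_smul, add_vecMulVec, vecMulVec_add]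
  abel

theorem det_sub_vecMulVec_mulVec_add_vecMulVec [DecidableEq ι] {S : Matrix ι ι ℝ}
    (hS : S.IsHermitian) {u : ι → ℝ} (hu : u ⬝ᵥ S *ᵥ u = 1) (w : ι → ℝ) :
    (S - vecMulVec (S *ᵥ u) (S *ᵥ u) + vecMulVec w w).det = (u ⬝ᵥ w) ^ 2 * S.det := by
  have hdet : (1 + vecMulVec (w - S *ᵥ u) u).det = u ⬝ᵥ w := by
    rw [vecMulVec_eq Unit, det_one_add_replicateCol_mul_replicateRow, dotProduct_sub, hu]
    ring
  rw [sub_vecMulVec_mulVec_add_vecMulVec hS hu, det_mul, det_mul, det_transpose, hdet]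
  ring

theorem posSemidef_sub_vecMulVec_mulVec_add_vecMulVec {S : Matrix ι ι ℝ} (hS : S.PosSemidef)
    {u : ι → ℝ} (hu : u ⬝ᵥ S *ᵥ u = 1) (w : ι → ℝ) :
    (S - vecMulVec (S *ᵥ u) (S *ᵥ u) + vecMulVec w w).PosSemidef := by
  classical
  rw [sub_vecMulVec_mulVec_add_vecMulVec hS.1 hu]
  exact hS.mul_mul_conjTranspose_same _

theorem trace_sub_vecMulVec_mulVec_pos [Nontrivial ι] {S : Matrix ι ι ℝ} (hS : S.PosDef)
    {u : ι → ℝ} (hu : u ⬝ᵥ S *ᵥ u = 1) : 0 < (S - vecMulVec (S *ᵥ u) (S *ᵥ u)).trace := by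
  classical
  have hpsd : (S - vecMulVec (S *ᵥ u) (S *ᵥ u)).PosSemidef := by
    simpa using posSemidef_sub_vecMulVec_mulVec_add_vecMulVec hS.posSemidef hu 0
  refine hpsd.trace_nonneg.lt_of_ne' fun h => hS.det_pos.ne' ?_
  rw [sub_eq_zero.mp (hpsd.trace_eq_zero_iff.mp h), det_vecMulVec]

theorem dotProduct_mul_det_le_trace_div_pow [DecidableEq ι] [Nontrivial ι] {S : Matrix ι ι ℝ}
    (hS : S.PosDef) {u : ι → ℝ} (hu : u ⬝ᵥ S *ᵥ u = 1) :
    (u ⬝ᵥ u) * S.det ≤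
      ((S - vecMulVec (S *ᵥ u) (S *ᵥ u)).trace / (Fintype.card ι - 1 : ℝ)) ^
        (Fintype.card ι - 1) := by
  have hcard : (1 : ℝ) < Fintype.card ι := by exact_mod_cast Fintype.one_lt_card
  have htr := trace_sub_vecMulVec_mulVec_pos hS hu
  set V := S - vecMulVec (S *ᵥ u) (S *ᵥ u) with hV
  set d : ℝ := Fintype.card ι - 1 with hd
  have hd0 : 0 < d := by linarith
  have huu : 0 < u ⬝ᵥ u := by
    have hu0 : u ≠ 0 := by rintro rfl; simp at hu
    simpa using dotProduct_star_self_pos_iff.mpr hu0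
  set m := V.trace / d with hm
  have hm0 : 0 < m := by positivity
  -- This weight gives `V + β² u uᵀ` mean eigenvalue `m`, which makes AM–GM optimal.
  set β := √(m / (u ⬝ᵥ u))
  have hββ : β * β = m / (u ⬝ᵥ u) := mul_self_sqrt (by positivity)
  have htrace : (V + vecMulVec (β • u) (β • u)).trace / Fintype.card ι = m := by
    rw [trace_add, trace_vecMulVec, smul_dotProduct, dotProduct_smul, smul_smul, hββ, smul_eq_mul,
      div_mul_cancel₀ _ huu.ne', div_eq_iff (by positivity)]
    have : V.trace = m * d := by rw [hm]; field_simp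
    rw [this, hd]; ring
  have amgm := det_le_trace_div_card_pow
    (posSemidef_sub_vecMulVec_mulVec_add_vecMulVec hS.posSemidef hu (β • u))
  rw [htrace, det_sub_vecMulVec_mulVec_add_vecMulVec hS.1 hu, dotProduct_smul, smul_eq_mul,
    ← Nat.sub_add_cancel Fintype.one_lt_card.le, pow_succ _ (Fintype.card ι - 1)] at amgm
  refine le_of_mul_le_mul_right ?_ hm0
  calc (u ⬝ᵥ u) * S.det * m = (β * (u ⬝ᵥ u)) ^ 2 * S.det := by
        rw [mul_pow, sq β, hββ]; field_simp
    _ ≤ _ := amgm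

theorem le_sub_one_mul_rpow_inv_sub_one {x : ℝ} (hx : 2 ≤ x) :
    x ≤ (x - 1) * x ^ (1 / (x - 1)) := by
  have hd : 0 < x - 1 := by linarith
  have h := rpow_one_add_le_one_add_mul_self (s := x - 1) (p := 1 - 1 / (x - 1)) (by linarith)
    (sub_nonneg.mpr (by rw [div_le_one hd]; linarith)) (sub_le_self _ (by positivity))
  have hx0 : 0 < x := by linarith
  rw [add_sub_cancel, rpow_sub hx0, rpow_one, div_le_iff₀ (by positivity)] at h
  refine h.trans_eq ?_
  field_simp
  ring

theorem card_mul_det_rpow_le_trace [DecidableEq ι] [Nontrivial ι] {S : Matrix ι ι ℝ}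
    (hS : S.PosDef) (h1 : 1 ⬝ᵥ S *ᵥ 1 = 1) :
    Fintype.card ι * S.det ^ (1 / (Fintype.card ι - 1 : ℝ)) ≤
      (S - vecMulVec (S *ᵥ 1) (S *ᵥ 1)).trace := by
  have hcard : (2 : ℝ) ≤ Fintype.card ι := by exact_mod_cast Fintype.one_lt_card
  have htr := trace_sub_vecMulVec_mulVec_pos hS h1
  have hdet := dotProduct_mul_det_le_trace_div_pow hS h1
  set V := S - vecMulVec (S *ᵥ 1) (S *ᵥ 1)
  have hd : (0 : ℝ) < Fintype.card ι - 1 := by linarith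
  rw [one_dotProduct_one, ← rpow_natCast, Nat.cast_pred Fintype.card_pos,
    ← rpow_inv_le_iff_of_pos (mul_nonneg (by positivity) hS.det_pos.le) (by positivity) hd,
    mul_rpow (by positivity) hS.det_pos.le, le_div_iff₀ hd, inv_eq_one_div] at hdet
  calc _ ≤ (Fintype.card ι - 1 : ℝ) * Fintype.card ι ^ (1 / (Fintype.card ι - 1 : ℝ)) *
        S.det ^ (1 / (Fintype.card ι - 1 : ℝ)) := by
        gcongr
        · exact rpow_nonneg hS.det_pos.le _
        · exact le_sub_one_mul_rpow_inv_sub_one hcard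
    _ ≤ V.trace := by linarith

theorem exists_mul_eq_one_of_mulVec_injective {m n K : Type*} [Fintype m] [Fintype n]
    [DecidableEq n] [Field K] {A : Matrix m n K}
    (hA : Function.Injective (A *ᵥ ·)) : ∃ B : Matrix n m K, B * A = 1 := by
  classical
  obtain ⟨g, hg⟩ := A.mulVecLin.exists_leftInverse_of_injective (LinearMap.ker_eq_bot.2 hA)
  refine ⟨LinearMap.toMatrix' g, ?_⟩
  rw [← LinearMap.toMatrix'_toLin' A, ← LinearMap.toMatrix'_comp, toLin'_apply', hg,
    LinearMap.toMatrix'_id]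

end LinearAlgebra

section ProductWeights

variable {κ : Type*} [Fintype κ] {r g : κ → ℝ}

theorem sum_prod_mul_add_sum_sq (hr : ∑ z, r z = 1) (hg : ∑ z, r z * g z = 0) (n : ℕ) (α : ℝ) :
    ∑ y : Fin n → κ, (∏ i, r (y i)) * (α + ∑ i, g (y i)) ^ 2 =
      α ^ 2 + n * ∑ z, r z * g z ^ 2 := by
  induction n generalizing α with
  | zero => simp
  | succ n ih =>
    have hfirst (z : κ) : ∑ y : Fin n → κ, (∏ i, r ((Fin.cons z y : Fin (n + 1) → κ) i)) *
        (α + ∑ i, g ((Fin.cons z y : Fin (n + 1) → κ) i)) ^ 2 =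
          r z * ((α + g z) ^ 2 + n * ∑ z, r z * g z ^ 2) := by
      rw [← ih, mul_sum]
      refine sum_congr rfl fun y _ => ?_
      simp only [Fin.prod_univ_succ, Fin.sum_univ_succ, Fin.cons_zero, Fin.cons_succ]
      ring
    have hexpand (z : κ) : r z * ((α + g z) ^ 2 + n * ∑ z, r z * g z ^ 2) =
        (α ^ 2 + n * ∑ z, r z * g z ^ 2) * r z + 2 * α * (r z * g z) + r z * g z ^ 2 := by ring
    rw [← (Fin.consEquiv fun _ : Fin (n + 1) => κ).sum_comp, Fintype.sum_prod_type]
    simp only [Fin.consEquiv, Equiv.coe_fn_mk, hfirst, hexpand, sum_add_distrib, ← mul_sum, hr, hg]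
    push_cast
    ring

theorem neg_two_mul_sum_mul_score_le (hr0 : ∀ z, 0 ≤ r z) (hr : ∑ z, r z = 1)
    (hg : ∑ z, r z * g z = 0) {n : ℕ} (hn : 0 < n) {c : ℝ} (hc : 0 < c) (α : ℝ)
    (e : (Fin n → κ) → ℝ) :
    -2 * ∑ y, e y * ((∏ i, r (y i)) * (α + ∑ i, g (y i))) ≤
      n * ((∑ y, e y ^ 2 * ∏ i, r (y i)) * c) + (∑ z, r z * g z ^ 2) / c + α ^ 2 / c / n := by
  have hpointwise (y : Fin n → κ) : -2 * (e y * ((∏ i, r (y i)) * (α + ∑ i, g (y i)))) ≤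
      n * c * (e y ^ 2 * ∏ i, r (y i)) +
        (∏ i, r (y i)) * (α + ∑ i, g (y i)) ^ 2 / (n * c) := by
    have hL : 0 ≤ ∏ i, r (y i) := prod_nonneg fun i _ => hr0 _
    rw [← sub_nonneg]
    have : n * c * (e y ^ 2 * ∏ i, r (y i)) +
        (∏ i, r (y i)) * (α + ∑ i, g (y i)) ^ 2 / (n * c) -
        -2 * (e y * ((∏ i, r (y i)) * (α + ∑ i, g (y i)))) =
        (∏ i, r (y i)) * (n * c * e y + (α + ∑ i, g (y i))) ^ 2 / (n * c) := by
      field_simp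
      ring
    rw [this]
    positivity
  rw [mul_sum]
  refine (sum_le_sum fun y _ => hpointwise y).trans_eq ?_
  rw [sum_add_distrib, ← mul_sum, ← sum_div, sum_prod_mul_add_sum_sq hr hg]
  field_simp
  ring

theorem mul_sum_sub_average_sq_mul_prod (hr : ∑ z, r z = 1) {m : ℝ} (hg : ∑ z, r z * g z = m)
    {n : ℕ} (hn : 0 < n) :
    n * ∑ y : Fin n → κ, (m - (∑ i, g (y i)) / n) ^ 2 * ∏ i, r (y i) =
      ∑ z, r z * (g z - m) ^ 2 := by
  have hcentered : ∑ z, r z * (g z - m) = 0 := by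
    simp only [mul_sub, sum_sub_distrib, ← sum_mul, hr, hg, one_mul, sub_self]
  have hterm (y : Fin n → κ) : (m - (∑ i, g (y i)) / n) ^ 2 * ∏ i, r (y i) =
      (∏ i, r (y i)) * (0 + ∑ i, (g (y i) - m)) ^ 2 / n ^ 2 := by
    rw [sum_sub_distrib, sum_const, card_univ, Fintype.card_fin, nsmul_eq_mul]
    field_simp
    ring
  simp only [hterm]
  rw [← sum_div, sum_prod_mul_add_sum_sq hr hcentered]
  field_simp
  ring

end ProductWeights

section Divergence

variable {E : Type*} [NormedAddCommGroup E] [NormedSpace ℝ E]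

/-- The divergence of a vector field on `E`, defined as the trace of its derivative so that no basis
has to be chosen. -/
def divergence (X : E → E) (q : E) : ℝ :=
  LinearMap.trace ℝ E (fderiv ℝ X q)

theorem divergence_eq_zero_of_notMem_tsupport {X : E → E} {q : E} (hq : q ∉ tsupport X) :
    divergence X q = 0 := by
  simp [divergence, fderiv_of_notMem_tsupport ℝ hq]

variable [FiniteDimensional ℝ E]

theorem divergence_smul {g : E → ℝ} {X : E → E} {q : E} (hg : DifferentiableAt ℝ g q)
    (hX : DifferentiableAt ℝ X q) :
    divergence (fun q => g q • X q) q = fderiv ℝ g q (X q) + g q * divergence X q := by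
  have hsmul : (((fderiv ℝ g q).smulRight (X q) : E →L[ℝ] E) : E →ₗ[ℝ] E) =
      (fderiv ℝ g q : E →ₗ[ℝ] ℝ).smulRight (X q) := rfl
  rw [divergence, fderiv_fun_smul hg hX, ContinuousLinearMap.toLinearMap_add, map_add,
    ContinuousLinearMap.toLinearMap_smul, map_smul, hsmul, LinearMap.trace_smulRight, add_comm]
  rfl

theorem continuous_divergence {X : E → E} (hX : ContDiff ℝ 1 X) : Continuous (divergence X) :=
  ((LinearMap.trace ℝ E ∘ₗ ContinuousLinearMap.coeLM ℝ).continuous_of_finiteDimensional).comp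
    (hX.continuous_fderiv one_ne_zero)

variable [MeasurableSpace E] [BorelSpace E] (ν : Measure E) [ν.IsAddHaarMeasure]

theorem integral_divergence_eq_zero {X : E → E} (hX : ContDiff ℝ 1 X)
    (hXc : HasCompactSupport X) : ∫ q, divergence X q ∂ν = 0 := by
  let b := Module.finBasis ℝ E
  let coord (i) : E →L[ℝ] ℝ := LinearMap.toContinuousLinearMap (b.coord i)
  have hdiv (q : E) : divergence X q = ∑ i, fderiv ℝ (coord i ∘ X) q (b i) := by
    rw [divergence, LinearMap.trace_eq_matrix_trace ℝ b, Matrix.trace]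
    refine Finset.sum_congr rfl fun i _ => ?_
    rw [fderiv_comp q (coord i).differentiableAt (hX.differentiable one_ne_zero q),
      (coord i).fderiv]
    simp [LinearMap.toMatrix_apply, coord]
  have hC1 (i) : ContDiff ℝ 1 (coord i ∘ X) := (coord i).contDiff.comp hX
  have hsupp (i) : HasCompactSupport (coord i ∘ X) := hXc.comp_left (map_zero _)
  have hint (i) : Integrable (fun q => fderiv ℝ (coord i ∘ X) q (b i)) ν :=
    have hcont := ((hC1 i).continuous_fderiv one_ne_zero).clm_apply
      (continuous_const (y := b i))
    hcont.integrable_of_hasCompactSupport ((hsupp i).fderiv_apply ℝ (b i))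
  have hzero (i) : ∫ q, fderiv ℝ (coord i ∘ X) q (b i) ∂ν = 0 := by
    simpa using integral_mul_fderiv_eq_neg_fderiv_mul_of_integrable (μ := ν) (v := b i)
      (f := fun _ => (1 : ℝ)) (g := coord i ∘ X) (by simp) (by simpa using hint i)
      (by simpa only [one_mul] using (hC1 i).continuous.integrable_of_hasCompactSupport (hsupp i))
      (fun _ _ => differentiableAt_const _)
      (fun q _ => (hC1 i).differentiable one_ne_zero q)
  simp only [hdiv]
  rw [integral_finsetSum _ fun i _ => hint i]
  exact sum_eq_zero fun i _ => hzero i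

end Divergence

section VanTrees

variable {E : Type*} [NormedAddCommGroup E] [NormedSpace ℝ E] {κ : Type*} {r : E → κ → ℝ}
  {q : E}

theorem fderiv_prod_eq_mul_sum_div {n : ℕ} (hr : ∀ z, DifferentiableAt ℝ (r · z) q)
    (hr0 : ∀ z, r q z ≠ 0) (y : Fin n → κ) (v : E) :
    fderiv ℝ (fun q => ∏ i, r q (y i)) q v =
      (∏ i, r q (y i)) * ∑ i, fderiv ℝ (r · (y i)) q v / r q (y i) := by
  rw [fderiv_finsetProd fun i _ => hr (y i), _root_.sum_apply, mul_sum]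
  refine sum_congr rfl fun i _ => ?_
  rw [_root_.smul_apply, smul_eq_mul, ← mul_prod_erase univ _ (mem_univ i)]
  field_simp [hr0 (y i)]

variable [Fintype κ]

/-- The Fisher information at `q` of the statistical model `q ↦ (r q z)_z` on the finite sample
space `κ`, as a quadratic form evaluated at the tangent vector `v`. -/
def fisherInfo (r : E → κ → ℝ) (q v : E) : ℝ :=
  ∑ z, fderiv ℝ (r · z) q v ^ 2 / r q z

theorem continuousOn_fisherInfo {K : Set E} {X : E → E} (hr : ∀ z, ContDiff ℝ 1 (r · z))
    (hr0 : ∀ q ∈ K, ∀ z, r q z ≠ 0) (hX : ContinuousOn X K) :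
    ContinuousOn (fun q => fisherInfo r q (X q)) K :=
  continuousOn_finsetSum _ fun z _ =>
    ((((hr z).continuous_fderiv one_ne_zero).continuousOn.clm_apply hX).pow 2).div
      (hr z).continuous.continuousOn fun q hq => hr0 q hq z

theorem sum_fderiv_eq_zero (hr : ∀ z, Differentiable ℝ (r · z)) (hsum : ∀ q, ∑ z, r q z = 1)
    (v : E) : ∑ z, fderiv ℝ (r · z) q v = 0 := by
  rw [← _root_.sum_apply, ← fderiv_fun_sum fun z _ => hr z q]
  simp [hsum]

theorem sum_divergence_smul [FiniteDimensional ℝ E] {X : E → E} {ψ : E → ℝ} {n : ℕ}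
    (hr : ∀ z, Differentiable ℝ (r · z)) (hsum : ∀ q, ∑ z, r q z = 1) (hr0 : ∀ z, r q z ≠ 0)
    (hψ : DifferentiableAt ℝ ψ q) (hX : DifferentiableAt ℝ X q) (T : (Fin n → κ) → ℝ) :
    ∑ y, divergence (fun q => ((ψ q - T y) * ∏ i, r q (y i)) • X q) q =
      fderiv ℝ ψ q (X q) + ∑ y : Fin n → κ, (ψ q - T y) * ((∏ i, r q (y i)) *
        (divergence X q + ∑ i, fderiv ℝ (r · (y i)) q (X q) / r q (y i))) := by
  have hone : ∑ y : Fin n → κ, ∏ i, r q (y i) = 1 := by rw [← Fintype.sum_pow, hsum, one_pow]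
  rw [← mul_one (fderiv ℝ ψ q (X q)), ← hone, mul_sum, ← sum_add_distrib]
  refine sum_congr rfl fun y _ => ?_
  have hprod : DifferentiableAt ℝ (fun q => ∏ i, r q (y i)) q :=
    (HasFDerivAt.finsetProd fun i _ => (hr (y i) q).hasFDerivAt).differentiableAt
  rw [divergence_smul ((hψ.sub_const _).fun_mul hprod) hX, fderiv_fun_mul (hψ.sub_const _) hprod,
    fderiv_sub_const]
  simp only [_root_.add_apply, _root_.smul_apply, smul_eq_mul,
    fderiv_prod_eq_mul_sum_div (fun z => hr z q) hr0]
  ring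

theorem neg_two_mul_sum_score_le_fisherInfo {X : E → E} {n : ℕ} (hn : 0 < n)
    (hr : ∀ z, Differentiable ℝ (r · z)) (hsum : ∀ q, ∑ z, r q z = 1) (hr0 : ∀ z, 0 < r q z)
    {c : ℝ} (hc : 0 < c) (e : (Fin n → κ) → ℝ) :
    -2 * ∑ y, e y * ((∏ i, r q (y i)) *
      (divergence X q + ∑ i, fderiv ℝ (r · (y i)) q (X q) / r q (y i))) ≤
      n * ((∑ y, e y ^ 2 * ∏ i, r q (y i)) * c) + fisherInfo r q (X q) / c +
        divergence X q ^ 2 / c / n := by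
  have hcancel (z) : r q z * (fderiv ℝ (r · z) q (X q) / r q z) = fderiv ℝ (r · z) q (X q) :=
    mul_div_cancel₀ _ (hr0 z).ne'
  have hcentred : ∑ z, r q z * (fderiv ℝ (r · z) q (X q) / r q z) = 0 := by
    simp only [hcancel, sum_fderiv_eq_zero hr hsum]
  have hinfo : ∑ z, r q z * (fderiv ℝ (r · z) q (X q) / r q z) ^ 2 = fisherInfo r q (X q) :=
    sum_congr rfl fun z _ => by rw [sq, ← mul_assoc, hcancel, sq, mul_div_assoc]
  simpa only [hinfo] using neg_two_mul_sum_mul_score_le (fun z => (hr0 z).le) (hsum q) hcentred hn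
    hc (divergence X q) e

variable [FiniteDimensional ℝ E] [MeasurableSpace E] [BorelSpace E] (ν : Measure E)
  [ν.IsAddHaarMeasure]

theorem setIntegral_fderiv_eq_neg_sum_score {X : E → E} {ψ : E → ℝ} {K : Set E} {n : ℕ}
    (hX : ContDiff ℝ 1 X) (hK : IsCompact K) (hXK : tsupport X ⊆ K)
    (hr : ∀ z, ContDiff ℝ 1 (r · z)) (hsum : ∀ q, ∑ z, r q z = 1)
    (hr0 : ∀ q ∈ K, ∀ z, r q z ≠ 0) (hψ : ContDiff ℝ 1 ψ) (T : (Fin n → κ) → ℝ) :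
    ∫ q in K, fderiv ℝ ψ q (X q) ∂ν =
      -∫ q in K, ∑ y : Fin n → κ, (ψ q - T y) * ((∏ i, r q (y i)) *
        (divergence X q + ∑ i, fderiv ℝ (r · (y i)) q (X q) / r q (y i))) ∂ν := by
  let Y (y : Fin n → κ) (q : E) : E := ((ψ q - T y) * ∏ i, r q (y i)) • X q
  have hY (y) : ContDiff ℝ 1 (Y y) :=
    ((hψ.sub contDiff_const).mul (contDiff_prod fun i _ => hr (y i))).smul hX
  have hYK (y) : tsupport (Y y) ⊆ K := (closure_mono fun q hq => right_ne_zero_of_smul hq).trans hXK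
  have hflux (y) : ∫ q in K, divergence (Y y) q ∂ν = 0 := by
    rw [setIntegral_eq_integral_of_forall_compl_eq_zero fun q hq =>
      divergence_eq_zero_of_notMem_tsupport fun h => hq (hYK y h)]
    exact integral_divergence_eq_zero ν (hY y) (hK.of_isClosed_subset (isClosed_tsupport _) (hYK y))
  have hdivint (y) : IntegrableOn (divergence (Y y)) K ν :=
    (continuous_divergence (hY y)).continuousOn.integrableOn_compact hK
  have hψint : IntegrableOn (fun q => fderiv ℝ ψ q (X q)) K ν :=
    (((hψ.continuous_fderiv one_ne_zero).clm_apply hX.continuous).continuousOn).integrableOn_compact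
      hK
  have hpointwise : ∀ q ∈ K, ∑ y : Fin n → κ, (ψ q - T y) * ((∏ i, r q (y i)) *
      (divergence X q + ∑ i, fderiv ℝ (r · (y i)) q (X q) / r q (y i))) =
        ∑ y, divergence (Y y) q - fderiv ℝ ψ q (X q) := fun q hq => by
    rw [sum_divergence_smul (fun z => (hr z).differentiable one_ne_zero) hsum (hr0 q hq)
      (hψ.differentiable one_ne_zero q) (hX.differentiable one_ne_zero q)]
    ring
  rw [setIntegral_congr_fun hK.measurableSet hpointwise,
    integral_sub (integrable_finsetSum _ fun y _ => hdivint y) hψint,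
    integral_finsetSum _ fun y _ => hdivint y, sum_eq_zero fun y _ => hflux y, zero_sub, neg_neg]

/-- Van Trees inequality along a vector field. Only the field `X` is differentiated, not the prior
`f`, so a merely continuous prior is allowed. -/
theorem two_mul_setIntegral_fderiv_le {X : E → E} {ψ f : E → ℝ} {K : Set E} {n : ℕ} (hn : 0 < n)
    (hX : ContDiff ℝ 1 X) (hK : IsCompact K) (hXK : tsupport X ⊆ K)
    (hr : ∀ z, ContDiff ℝ 1 (r · z)) (hsum : ∀ q, ∑ z, r q z = 1)
    (hr0 : ∀ q ∈ K, ∀ z, 0 < r q z) (hψ : ContDiff ℝ 1 ψ) (hf : ContinuousOn f K)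
    (hf0 : ∀ q ∈ K, 0 < f q) (T : (Fin n → κ) → ℝ) :
    2 * ∫ q in K, fderiv ℝ ψ q (X q) ∂ν ≤
      n * ∫ q in K, (∑ y : Fin n → κ, (ψ q - T y) ^ 2 * ∏ i, r q (y i)) * f q ∂ν +
      ∫ q in K, fisherInfo r q (X q) / f q ∂ν + (∫ q in K, divergence X q ^ 2 / f q ∂ν) / n := by
  have hrne : ∀ q ∈ K, ∀ z, r q z ≠ 0 := fun q hq z => (hr0 q hq z).ne'
  have hfne : ∀ q ∈ K, f q ≠ 0 := fun q hq => (hf0 q hq).ne'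
  have hrc (z) : ContinuousOn (r · z) K := (hr z).continuous.continuousOn
  have hprod (y : Fin n → κ) : ContinuousOn (fun q => ∏ i, r q (y i)) K :=
    continuousOn_finsetProd _ fun i _ => hrc (y i)
  have herr (y) : ContinuousOn (fun q => ψ q - T y) K :=
    hψ.continuous.continuousOn.sub continuousOn_const
  have hdiv : ContinuousOn (divergence X) K := (continuous_divergence hX).continuousOn
  have hscore (z) : ContinuousOn (fun q => fderiv ℝ (r · z) q (X q) / r q z) K :=
    (((hr z).continuous_fderiv one_ne_zero).clm_apply hX.continuous).continuousOn.div (hrc z)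
      fun q hq => hrne q hq z
  have hscoreInt : IntegrableOn (fun q => ∑ y : Fin n → κ, (ψ q - T y) * ((∏ i, r q (y i)) *
      (divergence X q + ∑ i, fderiv ℝ (r · (y i)) q (X q) / r q (y i)))) K ν :=
    (continuousOn_finsetSum _ fun y _ => (herr y).mul <| (hprod y).mul <|
      hdiv.add <| continuousOn_finsetSum _ fun i _ => hscore (y i)).integrableOn_compact hK
  have hriskInt : IntegrableOn
      (fun q => n * ((∑ y : Fin n → κ, (ψ q - T y) ^ 2 * ∏ i, r q (y i)) * f q)) K ν :=
    (((continuousOn_finsetSum _ fun y _ => ((herr y).pow 2).mul (hprod y)).mul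
      hf).integrableOn_compact hK).const_mul _
  have hinfoInt : IntegrableOn (fun q => fisherInfo r q (X q) / f q) K ν :=
    ((continuousOn_fisherInfo hr hrne hX.continuous.continuousOn).div hf
      hfne).integrableOn_compact hK
  have hsumInt : IntegrableOn (fun q =>
      n * ((∑ y : Fin n → κ, (ψ q - T y) ^ 2 * ∏ i, r q (y i)) * f q) +
        fisherInfo r q (X q) / f q) K ν := hriskInt.add hinfoInt
  have hdivInt : IntegrableOn (fun q => divergence X q ^ 2 / f q / n) K ν :=
    (((hdiv.pow 2).div hf hfne).integrableOn_compact hK).div_const _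
  rw [setIntegral_fderiv_eq_neg_sum_score ν hX hK hXK hr hsum hrne hψ T, mul_neg, ← neg_mul,
    ← integral_const_mul, ← integral_const_mul, ← integral_div, ← integral_add hriskInt hinfoInt,
    ← integral_add hsumInt hdivInt]
  exact setIntegral_mono_on (hscoreInt.const_mul _) (hsumInt.add hdivInt) hK.measurableSet
    fun q hq => neg_two_mul_sum_score_le_fisherInfo hn
      (fun z => (hr z).differentiable one_ne_zero) hsum (hr0 q hq) (hf0 q hq) fun y => ψ q - T y

end VanTrees

section SmoothMinorant

theorem continuous_min_of_continuousOn_support {X : Type*} [TopologicalSpace X] {f ρ : X → ℝ}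
    (hρ : Continuous ρ) (hf : ContinuousOn f (Function.support ρ)) (hf0 : ∀ q, 0 ≤ f q)
    (hρ0 : ∀ q, 0 ≤ ρ q) : Continuous fun q => min (f q) (ρ q) := by
  refine continuous_iff_continuousAt.mpr fun q => ?_
  by_cases hq : ρ q = 0
  · have hmin : min (f q) (ρ q) = 0 := by rw [hq, min_eq_right (hf0 q)]
    rw [ContinuousAt, hmin]
    exact squeeze_zero (fun q => le_min (hf0 q) (hρ0 q)) (fun q => min_le_right _ _)
      (by simpa [hq] using hρ.tendsto q)
  · exact (hf.continuousAt ((hρ.isOpen_support).mem_nhds hq)).min hρ.continuousAt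

variable {E : Type*} [NormedAddCommGroup E] [NormedSpace ℝ E] [FiniteDimensional ℝ E]

theorem exists_contDiff_abs_le_and_abs_sub_le (n : ℕ∞) {u : E → ℝ} (hu : Continuous u)
    (hu0 : ∀ q, 0 ≤ u q) {ε : ℝ} (hε : 0 < ε) :
    ∃ φ : E → ℝ, ContDiff ℝ n φ ∧ tsupport φ ⊆ {q | ε ≤ u q} ∧ (∀ q, |φ q| ≤ u q) ∧
      ∀ q, |φ q - u q| ≤ 2 * ε := by
  obtain ⟨φ, hφ, happrox, hsupp⟩ := (by fun_prop : Continuous fun q => max (u q - ε) 0)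
    |>.exists_contDiff_approx n (continuous_const (y := ε)) fun _ => hε
  have hlevel {q : E} (hq : φ q ≠ 0) : ε ≤ u q := by
    by_contra! h
    exact hsupp hq (max_eq_right (by linarith))
  have hclose (q : E) : |φ q - max (u q - ε) 0| < ε := happrox q
  refine ⟨φ, hφ, closure_minimal (fun q => hlevel) (isClosed_le continuous_const hu),
    fun q => ?_, fun q => ?_⟩
  · by_cases hq : φ q = 0
    · simpa [hq] using hu0 q
    · have h := hclose q
      rw [max_eq_left (by linarith [hlevel hq]), abs_lt] at h
      exact abs_le.mpr ⟨by linarith [hlevel hq], by linarith⟩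
  · have h := abs_lt.mp (hclose q)
    have hmax : |max (u q - ε) 0 - u q| ≤ ε := by
      rw [abs_le]
      exact ⟨by linarith [le_max_left (u q - ε) 0], by
        linarith [max_le (by linarith : u q - ε ≤ u q) (hu0 q)]⟩
    rw [abs_le] at hmax ⊢
    constructor <;> linarith

theorem exists_contDiff_seq_abs_le_tendsto (n : ℕ∞) {U : Set E} (hU : IsOpen U) {f : E → ℝ}
    (hf : ContinuousOn f U) (hf0 : ∀ q, 0 ≤ f q) :
    ∃ φ : ℕ → E → ℝ, (∀ k, ContDiff ℝ n (φ k)) ∧ (∀ k, tsupport (φ k) ⊆ U ∩ {q | 0 < f q}) ∧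
      (∀ k q, |φ k q| ≤ f q) ∧ ∀ q ∈ U, Tendsto (φ · q) atTop (nhds (f q)) := by
  obtain ⟨ρ, hρU, hρ, hρ01⟩ := hU.exists_contDiff_support_eq (n := 0)
  have hρ0 (q : E) : 0 ≤ ρ q := (hρ01 ⟨q, rfl⟩).1
  let u (k : ℕ) (q : E) : ℝ := min (f q) ((k + 1 : ℝ) * ρ q)
  have hsupp (k : ℕ) : (Function.support fun q => (k + 1 : ℝ) * ρ q) = U := by
    rw [← hρU]
    ext q
    simp [Nat.cast_add_one_ne_zero k]
  have hu (k) : Continuous (u k) :=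
    continuous_min_of_continuousOn_support (continuous_const.mul hρ.continuous)
      (by rwa [hsupp]) hf0 fun q => mul_nonneg (by positivity) (hρ0 q)
  have hu0 (k) (q : E) : 0 ≤ u k q := le_min (hf0 q) (mul_nonneg (by positivity) (hρ0 q))
  choose φ hφ hsuppφ hle hsub using fun k : ℕ =>
    exists_contDiff_abs_le_and_abs_sub_le n (hu k) (hu0 k)
      (Nat.one_div_pos_of_nat (α := ℝ) (n := k))
  refine ⟨φ, hφ, fun k q hq => ?_, fun k q => (hle k q).trans (min_le_left _ _), fun q hq => ?_⟩
  · have hpos : 0 < u k q := Nat.one_div_pos_of_nat.trans_le (hsuppφ k hq)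
    refine ⟨?_, hpos.trans_le (min_le_left _ _)⟩
    rw [← hsupp k]
    exact (hpos.trans_le (min_le_right _ _)).ne'
  · have hρq : 0 < ρ q := (hρ0 q).lt_of_ne' (by rwa [← Function.mem_support, hρU])
    have huf : ∀ᶠ k : ℕ in atTop, u k q = f q := by
      filter_upwards [eventually_ge_atTop ⌈f q / ρ q⌉₊] with k hk
      have : f q / ρ q ≤ k := (Nat.le_ceil _).trans (by exact_mod_cast hk)
      rw [div_le_iff₀ hρq] at this
      exact min_eq_left (by linarith)
    have hzero : Tendsto (fun k : ℕ => 2 * (1 / ((k : ℝ) + 1))) atTop (nhds 0) := by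
      simpa using tendsto_one_div_add_atTop_nhds_zero_nat.const_mul (2 : ℝ)
    refine tendsto_iff_dist_tendsto_zero.mpr
      (squeeze_zero' (Eventually.of_forall fun _ => dist_nonneg) ?_ hzero)
    filter_upwards [huf] with k hk
    rw [dist_eq, ← hk]
    exact hsub k q

end SmoothMinorant

section InverseMatrix

variable {𝕜 E ι : Type*} [NontriviallyNormedField 𝕜] [NormedAddCommGroup E] [NormedSpace 𝕜 E]
  [Fintype ι] [DecidableEq ι] {n : WithTop ℕ∞} {A : E → Matrix ι ι 𝕜} {e : E}

theorem contDiffAt_matrix_det (hA : ∀ i j, ContDiffAt 𝕜 n (fun e => A e i j) e) :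
    ContDiffAt 𝕜 n (fun e => (A e).det) e := by
  simp only [det_apply']
  exact ContDiffAt.sum fun σ _ => contDiffAt_const.mul (contDiffAt_prod fun i _ => hA _ _)

theorem contDiffAt_matrix_inv_apply (hA : ∀ i j, ContDiffAt 𝕜 n (fun e => A e i j) e)
    (hdet : (A e).det ≠ 0) (i j : ι) : ContDiffAt 𝕜 n (fun e => (A e)⁻¹ i j) e := by
  simp only [Matrix.inv_def, Ring.inverse_eq_inv', Matrix.smul_apply, smul_eq_mul,
    adjugate_apply]
  refine ((contDiffAt_matrix_det hA).inv hdet).mul (contDiffAt_matrix_det fun k l => ?_)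
  simp only [updateRow_apply]
  split_ifs
  exacts [contDiffAt_const, hA k l]

end InverseMatrix

theorem mulVec_injective_of_rank_eq_card {m ι K : Type*} [Fintype ι]
    [Field K] {A : Matrix m ι K} (hA : A.rank = Fintype.card ι) :
    Function.Injective (A *ᵥ ·) := by
  have h := A.mulVecLin.finrank_range_add_finrank_ker
  rw [← Matrix.rank, hA, Module.finrank_fintype_fun_eq_card, Nat.add_eq_left,
    Submodule.finrank_eq_zero] at h
  exact LinearMap.ker_eq_bot.1 h

/-- The inverse-information matrix `V_p = D_p⁻¹ - p pᵀ`: on the tangent space of the simplex it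
is the Cramér–Rao matrix of a single observation. -/
def Vmat {a b : ℕ} (Q : Matrix (Fin b) (Fin a) ℝ) (p : Fin a → ℝ) : Matrix (Fin a) (Fin a) ℝ :=
  (Dmat Q p)⁻¹ - vecMulVec p p

section Information

variable {a b : ℕ} {Q : Matrix (Fin b) (Fin a) ℝ} {p : Fin a → ℝ}

theorem sum_mulVec_eq_sum (hcol : ∀ x, ∑ y, Q y x = 1) (v : Fin a → ℝ) :
    ∑ y, (Q *ᵥ v) y = ∑ x, v x := by
  simp only [mulVec, dotProduct]
  rw [sum_comm]
  simp [← sum_mul, hcol]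

theorem dotProduct_Dmat_mulVec (v w : Fin a → ℝ) :
    v ⬝ᵥ Dmat Q p *ᵥ w = ∑ y, (Q *ᵥ v) y * (Q *ᵥ w) y / (Q *ᵥ p) y := by
  rw [Dmat, ← mulVec_mulVec, ← mulVec_mulVec, dotProduct_mulVec, vecMul_transpose]
  simp only [dotProduct, mulVec_diagonal]
  exact sum_congr rfl fun y _ => by ring

theorem isSymm_Vmat : (Vmat Q p).IsSymm := by
  have hD : (Dmat Q p)ᵀ = Dmat Q p := by simp [Dmat, Matrix.mul_assoc]
  rw [IsSymm, Vmat, transpose_sub, transpose_nonsing_inv, hD, transpose_vecMulVec]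

theorem Dmat_posDef (hQ : Function.Injective (Q *ᵥ ·)) (hp : ∀ y, 0 < (Q *ᵥ p) y) :
    (Dmat Q p).PosDef := by
  simpa [Dmat] using
    (PosDef.diagonal fun y => inv_pos.2 (hp y)).conjTranspose_mul_mul_same hQ

theorem Dmat_mulVec_self (hcol : ∀ x, ∑ y, Q y x = 1) (hp : ∀ y, 0 < (Q *ᵥ p) y) :
    Dmat Q p *ᵥ p = 1 := by
  have hone : diagonal (fun y => ((Q *ᵥ p) y)⁻¹) *ᵥ (Q *ᵥ p) = 1 := by
    ext y
    rw [mulVec_diagonal, inv_mul_cancel₀ (hp y).ne', Pi.one_apply]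
  rw [Dmat, ← mulVec_mulVec, ← mulVec_mulVec, hone]
  ext x
  simpa [mulVec, dotProduct] using hcol x

theorem Dmat_inv_mulVec_one (hQ : Function.Injective (Q *ᵥ ·)) (hcol : ∀ x, ∑ y, Q y x = 1)
    (hp : ∀ y, 0 < (Q *ᵥ p) y) : (Dmat Q p)⁻¹ *ᵥ 1 = p := by
  rw [← Dmat_mulVec_self hcol hp, mulVec_mulVec,
    nonsing_inv_mul _ (Dmat_posDef hQ hp).det_pos.ne'.isUnit, one_mulVec]

theorem Vmat_mulVec_one (hQ : Function.Injective (Q *ᵥ ·)) (hcol : ∀ x, ∑ y, Q y x = 1)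
    (hp : ∀ y, 0 < (Q *ᵥ p) y) (hp1 : ∑ x, p x = 1) : Vmat Q p *ᵥ 1 = 0 := by
  rw [Vmat, sub_mulVec, Dmat_inv_mulVec_one hQ hcol hp, vecMulVec_mulVec, dotProduct_one, hp1]
  simp

theorem sum_Vmat_row (hQ : Function.Injective (Q *ᵥ ·)) (hcol : ∀ x, ∑ y, Q y x = 1)
    (hp : ∀ y, 0 < (Q *ᵥ p) y) (hp1 : ∑ x, p x = 1) (x : Fin a) : ∑ x', Vmat Q p x x' = 0 := by
  simpa [mulVec, dotProduct_one] using congrFun (Vmat_mulVec_one hQ hcol hp hp1) x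

theorem Vmat_mul_Dmat_mul_Vmat (hQ : Function.Injective (Q *ᵥ ·)) (hcol : ∀ x, ∑ y, Q y x = 1)
    (hp : ∀ y, 0 < (Q *ᵥ p) y) (hp1 : ∑ x, p x = 1) :
    Vmat Q p * Dmat Q p * Vmat Q p = Vmat Q p := by
  have hDV : Dmat Q p * Vmat Q p = 1 - vecMulVec 1 p := by
    rw [Vmat, Matrix.mul_sub, mul_nonsing_inv _ (Dmat_posDef hQ hp).det_pos.ne'.isUnit,
      mul_vecMulVec, Dmat_mulVec_self hcol hp]
  rw [Matrix.mul_assoc, hDV, Matrix.mul_sub, Matrix.mul_one, mul_vecMulVec,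
    Vmat_mulVec_one hQ hcol hp hp1, zero_vecMulVec, sub_zero]

/-- The Fisher information of one observation in the direction of row `x` of `V_p`. -/
theorem sum_mulVec_Vmat_sq_div (hQ : Function.Injective (Q *ᵥ ·)) (hcol : ∀ x, ∑ y, Q y x = 1)
    (hp : ∀ y, 0 < (Q *ᵥ p) y) (hp1 : ∑ x, p x = 1) (x : Fin a) :
    ∑ y, (Q *ᵥ Vmat Q p x) y ^ 2 / (Q *ᵥ p) y = Vmat Q p x x := by
  conv_rhs => rw [← Vmat_mul_Dmat_mul_Vmat hQ hcol hp hp1, mul_mul_apply, isSymm_Vmat.eq]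
  simp only [dotProduct_Dmat_mulVec, sq]

theorem Vmat_apply_self_nonneg (hQ : Function.Injective (Q *ᵥ ·)) (hcol : ∀ x, ∑ y, Q y x = 1)
    (hp : ∀ y, 0 < (Q *ᵥ p) y) (hp1 : ∑ x, p x = 1) (x : Fin a) : 0 ≤ Vmat Q p x x := by
  rw [← sum_mulVec_Vmat_sq_div hQ hcol hp hp1 x]
  exact sum_nonneg fun y _ => div_nonneg (sq_nonneg _) (hp y).le

theorem mul_exp_neg_log_det_le_trace_Vmat (ha : 2 ≤ a) (hQ : Function.Injective (Q *ᵥ ·))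
    (hcol : ∀ x, ∑ y, Q y x = 1) (hp : ∀ y, 0 < (Q *ᵥ p) y) (hp1 : ∑ x, p x = 1) :
    a * exp (-(1 / (a - 1) * log (Dmat Q p).det)) ≤ (Vmat Q p).trace := by
  have : Nontrivial (Fin a) := Fin.nontrivial_iff_two_le.mpr ha
  have hD := Dmat_posDef hQ hp
  have hinv := Dmat_inv_mulVec_one hQ hcol hp
  have h := card_mul_det_rpow_le_trace hD.inv (by rw [hinv, one_dotProduct, hp1])
  rwa [hinv, ← Vmat, Fintype.card_fin, det_nonsing_inv, Ring.inverse_eq_inv',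
    inv_rpow hD.det_pos.le, rpow_def_of_pos hD.det_pos, ← exp_neg, mul_comm (log _)] at h

theorem contDiffAt_Vmat_apply (hQ : Function.Injective (Q *ᵥ ·)) (hp : ∀ y, 0 < (Q *ᵥ p) y)
    (x x' : Fin a) : ContDiffAt ℝ 1 (fun p => Vmat Q p x x') p := by
  have hQp (y) : ContDiffAt ℝ 1 (fun p : Fin a → ℝ => (Q *ᵥ p) y) p := by
    unfold mulVec dotProduct
    fun_prop
  have hD (i j) : ContDiffAt ℝ 1 (fun p => Dmat Q p i j) p := by
    simp only [Dmat, mul_apply (N := Q), mul_diagonal, transpose_apply]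
    exact ContDiffAt.sum fun y _ =>
      (contDiffAt_const.mul ((hQp y).inv (hp y).ne')).mul contDiffAt_const
  simp only [Vmat, Matrix.sub_apply, vecMulVec_apply]
  exact (contDiffAt_matrix_inv_apply hD (Dmat_posDef hQ hp).det_pos.ne' x x').sub (by fun_prop)

end Information

section Chart

theorem isCompact_stdCorner (m : ℕ) : IsCompact (stdCorner m) := by
  refine (isCompact_Icc (a := (0 : Fin m → ℝ)) (b := 1)).of_isClosed_subset ?_ fun q hq =>
    ⟨hq.1, fun i => (single_le_sum (f := q) (fun i _ => hq.1 i) (mem_univ i)).trans hq.2⟩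
  simp only [stdCorner, Set.ofPred_and, Set.ofPred_forall]
  exact (isClosed_iInter fun i => isClosed_le (by fun_prop) (by fun_prop)).inter
    (isClosed_le (by fun_prop) (by fun_prop))

theorem convex_stdCorner (m : ℕ) : Convex ℝ (stdCorner m) := by
  simp only [stdCorner, Set.ofPred_and, Set.ofPred_forall]
  exact (convex_iInter fun i => convex_halfSpace_ge (LinearMap.proj (R := ℝ) i).isLinear 0).inter
    (convex_halfSpace_le ⟨fun _ _ => sum_add_distrib, fun _ _ => (mul_sum ..).symm⟩ 1)

theorem measurableSet_stdCorner (m : ℕ) : MeasurableSet (stdCorner m) :=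
  (isCompact_stdCorner m).measurableSet

/-- The linear part of the affine chart `emb a`; its range is the space of vectors of coordinate
sum zero. -/
def chartDir (a : ℕ) : (Fin (a - 1) → ℝ) →L[ℝ] (Fin a → ℝ) :=
  ContinuousLinearMap.pi fun x =>
    if h : (x : ℕ) < a - 1 then ContinuousLinearMap.proj ⟨x, h⟩
    else -∑ i, ContinuousLinearMap.proj i

theorem emb_eq_chartDir_add (a : ℕ) (q : Fin (a - 1) → ℝ) : emb a q = chartDir a q + emb a 0 := by
  ext x
  by_cases h : (x : ℕ) < a - 1
  · simp [emb, chartDir, h]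
  · simp [emb, chartDir, h, _root_.sum_apply, sub_eq_neg_add]

theorem hasFDerivAt_emb (a : ℕ) (q : Fin (a - 1) → ℝ) : HasFDerivAt (emb a) (chartDir a) q := by
  rw [funext (emb_eq_chartDir_add a)]
  exact (chartDir a).hasFDerivAt.add_const _

theorem contDiff_emb (a : ℕ) : ContDiff ℝ 1 (emb a) := by
  rw [funext (emb_eq_chartDir_add a)]
  fun_prop

variable {a : ℕ} [NeZero a]

theorem sum_emb (q : Fin (a - 1) → ℝ) : ∑ x, emb a q x = 1 := by
  obtain ⟨d, rfl⟩ := Nat.exists_eq_succ_of_ne_zero (NeZero.ne a)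
  rw [Fin.sum_univ_castSucc]
  simp [emb]

theorem emb_mem_simplex {q : Fin (a - 1) → ℝ} (hq : q ∈ stdCorner (a - 1)) :
    emb a q ∈ simplex a := by
  refine ⟨fun x => ?_, sum_emb q⟩
  unfold emb
  split_ifs
  exacts [hq.1 _, sub_nonneg.mpr hq.2]

theorem chartDir_comp_castLE {v : Fin a → ℝ} (hv : ∑ x, v x = 0) :
    chartDir a (v ∘ Fin.castLE (Nat.sub_le a 1)) = v := by
  obtain ⟨d, rfl⟩ := Nat.exists_eq_succ_of_ne_zero (NeZero.ne a)
  have hv' : ∑ i, v (Fin.castLE (Nat.sub_le (d + 1) 1) i) + v (Fin.last d) = 0 :=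
    (Fin.sum_univ_castSucc v).symm.trans hv
  ext x
  refine Fin.lastCases ?_ (fun i => ?_) x
  · simpa [chartDir, _root_.sum_apply] using neg_eq_of_add_eq_zero_right hv'
  · simp only [Nat.succ_eq_add_one, Nat.add_one_sub_one, chartDir, add_tsub_cancel_right,
      ContinuousLinearMap.coe_pi', Fin.val_castSucc, Fin.is_lt, ↓reduceDIte, Fin.eta,
      ContinuousLinearMap.proj_apply, Function.comp_apply]
    rfl

end Chart

section CramerRaoField

variable {a b : ℕ} {Q : Matrix (Fin b) (Fin a) ℝ}

theorem mulVec_pos_of_mem_simplex (hQ0 : ∀ y x, 0 < Q y x) {p : Fin a → ℝ} (hp : p ∈ simplex a)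
    (y : Fin b) : 0 < (Q *ᵥ p) y := by
  obtain ⟨x, -, hx⟩ := exists_ne_zero_of_sum_ne_zero (hp.2.trans_ne one_ne_zero)
  exact sum_pos' (fun x _ => mul_nonneg (hQ0 y x).le (hp.1 x))
    ⟨x, mem_univ x, mul_pos (hQ0 y x) ((hp.1 x).lt_of_ne' hx)⟩

theorem continuousOn_Vmat_apply (hQ0 : ∀ y x, 0 < Q y x) (hQ : Function.Injective (Q *ᵥ ·))
    (x x' : Fin a) : ContinuousOn (fun p => Vmat Q p x x') (simplex a) := fun _ hp =>
  (contDiffAt_Vmat_apply hQ (mulVec_pos_of_mem_simplex hQ0 hp) x x').continuousAt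
    |>.continuousWithinAt

theorem continuous_lik {n : ℕ} (Q : Matrix (Fin b) (Fin a) ℝ) (y : Fin n → Fin b) :
    Continuous (lik Q y) := by
  unfold lik mulVec dotProduct
  fun_prop

theorem hasFDerivAt_mulVec_emb (q : Fin (a - 1) → ℝ) (y : Fin b) :
    HasFDerivAt (fun q => (Q *ᵥ emb a q) y)
      ((ContinuousLinearMap.proj y).comp ((Matrix.toLin' Q).toContinuousLinearMap.comp
        (chartDir a))) q :=
  (ContinuousLinearMap.proj (R := ℝ) (φ := fun _ : Fin b => ℝ) y).hasFDerivAt.comp q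
    ((Matrix.toLin' Q).toContinuousLinearMap.hasFDerivAt.comp q (hasFDerivAt_emb a q))

theorem contDiff_mulVec_emb (y : Fin b) : ContDiff ℝ 1 fun q => (Q *ᵥ emb a q) y :=
  (contDiff_pi.mp (Matrix.toLin' Q).toContinuousLinearMap.contDiff y).comp (contDiff_emb a)

/-- The vector field `φ · (V_p)_{x,·}` on the simplex, read in the chart: the direction in which the
van Trees inequality is applied to the coordinate `p_x`, localised by the cut-off `φ`. -/
def crField (Q : Matrix (Fin b) (Fin a) ℝ) (φ : (Fin (a - 1) → ℝ) → ℝ) (x : Fin a)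
    (q : Fin (a - 1) → ℝ) : Fin (a - 1) → ℝ :=
  φ q • (Vmat Q (emb a q) x ∘ Fin.castLE (Nat.sub_le a 1))

variable {φ : (Fin (a - 1) → ℝ) → ℝ}

theorem tsupport_crField_subset (x : Fin a) : tsupport (crField Q φ x) ⊆ tsupport φ :=
  tsupport_smul_subset_left φ _

variable [NeZero a]

theorem contDiff_crField (hQ0 : ∀ y x, 0 < Q y x) (hQ : Function.Injective (Q *ᵥ ·))
    (hφ : ContDiff ℝ 1 φ) (hφΔ : tsupport φ ⊆ stdCorner (a - 1)) (x : Fin a) :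
    ContDiff ℝ 1 (crField Q φ x) := by
  refine contMDiff_iff_contDiff.mp <| contMDiff_of_tsupport fun q hq =>
    contMDiffAt_iff_contDiffAt.mpr <| hφ.contDiffAt.smul (contDiffAt_pi.mpr fun j => ?_)
  have hp := mulVec_pos_of_mem_simplex hQ0
    (emb_mem_simplex (hφΔ (tsupport_crField_subset x hq)))
  exact (contDiffAt_Vmat_apply hQ hp x _).comp q (contDiff_emb a).contDiffAt

theorem chartDir_crField (hQ0 : ∀ y x, 0 < Q y x) (hQ : Function.Injective (Q *ᵥ ·))
    (hcol : ∀ x, ∑ y, Q y x = 1) (φ : (Fin (a - 1) → ℝ) → ℝ) {q : Fin (a - 1) → ℝ}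
    (hq : q ∈ stdCorner (a - 1)) (x : Fin a) :
    chartDir a (crField Q φ x q) = φ q • Vmat Q (emb a q) x := by
  have hp := mulVec_pos_of_mem_simplex hQ0 (emb_mem_simplex hq)
  rw [crField, map_smul, chartDir_comp_castLE (sum_Vmat_row hQ hcol hp (sum_emb q) x)]

theorem fisherInfo_crField (hQ0 : ∀ y x, 0 < Q y x) (hQ : Function.Injective (Q *ᵥ ·))
    (hcol : ∀ x, ∑ y, Q y x = 1) (φ : (Fin (a - 1) → ℝ) → ℝ) {q : Fin (a - 1) → ℝ}
    (hq : q ∈ stdCorner (a - 1)) (x : Fin a) :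
    fisherInfo (fun q => Q *ᵥ emb a q) q (crField Q φ x q) =
      φ q ^ 2 * Vmat Q (emb a q) x x := by
  have hp := mulVec_pos_of_mem_simplex hQ0 (emb_mem_simplex hq)
  have hderiv (y : Fin b) : fderiv ℝ (fun q => (Q *ᵥ emb a q) y) q (crField Q φ x q) =
      φ q * (Q *ᵥ Vmat Q (emb a q) x) y := by
    rw [(hasFDerivAt_mulVec_emb q y).fderiv]
    change (Q *ᵥ chartDir a (crField Q φ x q)) y = _
    rw [chartDir_crField hQ0 hQ hcol φ hq, mulVec_smul, Pi.smul_apply, smul_eq_mul]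
  simp only [fisherInfo, hderiv]
  rw [← sum_mulVec_Vmat_sq_div hQ hcol hp (sum_emb q), mul_sum]
  exact sum_congr rfl fun y _ => by ring

theorem continuousOn_Vmat_emb (hQ0 : ∀ y x, 0 < Q y x) (hQ : Function.Injective (Q *ᵥ ·))
    (x : Fin a) : ContinuousOn (fun q => Vmat Q (emb a q) x x) (stdCorner (a - 1)) :=
  (continuousOn_Vmat_apply hQ0 hQ x x).comp (contDiff_emb a).continuous.continuousOn
    fun _ hq => emb_mem_simplex hq

theorem setIntegral_fisherInfo_crField_div_le (hQ0 : ∀ y x, 0 < Q y x)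
    (hQ : Function.Injective (Q *ᵥ ·)) (hcol : ∀ x, ∑ y, Q y x = 1)
    {f : (Fin (a - 1) → ℝ) → ℝ} (hf : ContinuousOn f (stdCorner (a - 1))) (hφ : Continuous φ)
    (hφΔ : tsupport φ ⊆ stdCorner (a - 1) ∩ {q | 0 < f q}) (hf0 : ∀ q, 0 ≤ f q)
    (hφf : ∀ q, |φ q| ≤ f q) (x : Fin a) :
    ∫ q in tsupport φ, fisherInfo (fun q => Q *ᵥ emb a q) q (crField Q φ x q) / f q ≤
      ∫ q in stdCorner (a - 1), Vmat Q (emb a q) x x * f q := by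
  have hsub : tsupport φ ⊆ stdCorner (a - 1) := fun q hq => (hφΔ hq).1
  have hK : IsCompact (tsupport φ) :=
    (isCompact_stdCorner _).of_isClosed_subset (isClosed_tsupport φ) hsub
  have hV0 : ∀ q ∈ stdCorner (a - 1), 0 ≤ Vmat Q (emb a q) x x := fun q hq =>
    Vmat_apply_self_nonneg hQ hcol (mulVec_pos_of_mem_simplex hQ0 (emb_mem_simplex hq))
      (sum_emb q) x
  have hV := continuousOn_Vmat_emb hQ0 hQ x
  have hVf := (hV.mul hf).integrableOn_compact (μ := volume) (isCompact_stdCorner _)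
  rw [setIntegral_congr_fun hK.measurableSet fun q hq => by
    rw [fisherInfo_crField hQ0 hQ hcol φ (hsub hq)]]
  calc ∫ q in tsupport φ, φ q ^ 2 * Vmat Q (emb a q) x x / f q
      ≤ ∫ q in tsupport φ, Vmat Q (emb a q) x x * f q := by
        refine setIntegral_mono_on ?_ (hVf.mono_set hsub) hK.measurableSet fun q hq => ?_
        · exact (((hφ.pow 2).continuousOn.mul (hV.mono hsub)).div (hf.mono hsub)
            fun q hq => (hφΔ hq).2.ne').integrableOn_compact hK
        · rw [div_le_iff₀ (hφΔ hq).2, mul_assoc, ← sq, mul_comm]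
          exact mul_le_mul_of_nonneg_left (sq_le_sq.mpr ((hφf q).trans (le_abs_self _)))
            (hV0 q (hsub hq))
    _ ≤ ∫ q in stdCorner (a - 1), Vmat Q (emb a q) x x * f q :=
        setIntegral_mono_set hVf (ae_restrict_of_forall_mem (measurableSet_stdCorner _)
          fun q hq => mul_nonneg (hV0 q hq) (hf0 q)) hsub.eventuallyLE

theorem setIntegral_fderiv_emb_crField (hQ0 : ∀ y x, 0 < Q y x)
    (hQ : Function.Injective (Q *ᵥ ·)) (hcol : ∀ x, ∑ y, Q y x = 1)
    (hφΔ : tsupport φ ⊆ stdCorner (a - 1)) (x : Fin a) :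
    ∫ q in tsupport φ, fderiv ℝ (fun q => emb a q x) q (crField Q φ x q) =
      ∫ q in stdCorner (a - 1), φ q * Vmat Q (emb a q) x x := by
  rw [← setIntegral_eq_of_subset_of_forall_sdiff_eq_zero (measurableSet_stdCorner _) hφΔ
    fun q hq => by rw [crField, image_eq_zero_of_notMem_tsupport hq.2, zero_smul, map_zero]]
  refine setIntegral_congr_fun (measurableSet_stdCorner _) fun q hq => ?_
  rw [(hasFDerivAt_pi'.mp (hasFDerivAt_emb a q) x).fderiv]
  exact congrFun (chartDir_crField hQ0 hQ hcol φ hq x) x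

/-- The van Trees inequality along `crField`: the score has second moment `φ² (V_p)ₓₓ ≤ f² (V_p)ₓₓ`,
and the divergence of the field only enters through the term `C / n`. -/
theorem exists_two_mul_setIntegral_mul_Vmat_le (hQ0 : ∀ y x, 0 < Q y x)
    (hQ : Function.Injective (Q *ᵥ ·)) (hcol : ∀ x, ∑ y, Q y x = 1)
    {f : (Fin (a - 1) → ℝ) → ℝ} (hf : ContinuousOn f (stdCorner (a - 1))) (hf0 : ∀ q, 0 ≤ f q)
    (hφ : ContDiff ℝ 1 φ) (hφΔ : tsupport φ ⊆ stdCorner (a - 1) ∩ {q | 0 < f q})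
    (hφf : ∀ q, |φ q| ≤ f q) (x : Fin a) :
    ∃ C : ℝ, ∀ n > 0, ∀ T : (Fin n → Fin b) → ℝ,
      2 * ∫ q in stdCorner (a - 1), φ q * Vmat Q (emb a q) x x ≤
        n * (∫ q in stdCorner (a - 1),
          (∑ y, (emb a q x - T y) ^ 2 * lik Q y (emb a q)) * f q) +
        (∫ q in stdCorner (a - 1), Vmat Q (emb a q) x x * f q) + C / n := by
  have hsub : tsupport φ ⊆ stdCorner (a - 1) := fun q hq => (hφΔ hq).1
  have hp : ∀ q ∈ stdCorner (a - 1), ∀ y, 0 < (Q *ᵥ emb a q) y := fun q hq =>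
    mulVec_pos_of_mem_simplex hQ0 (emb_mem_simplex hq)
  have hembx : ContDiff ℝ 1 fun q => emb a q x := contDiff_pi.mp (contDiff_emb a) x
  refine ⟨∫ q in tsupport φ, divergence (crField Q φ x) q ^ 2 / f q, fun n hn T => ?_⟩
  have hvanTrees := two_mul_setIntegral_fderiv_le volume hn (contDiff_crField hQ0 hQ hφ hsub x)
    ((isCompact_stdCorner _).of_isClosed_subset (isClosed_tsupport φ) hsub)
    (tsupport_crField_subset x) contDiff_mulVec_emb
    (fun q => (sum_mulVec_eq_sum hcol _).trans (sum_emb q)) (fun q hq => hp q (hsub hq)) hembx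
    (hf.mono hsub) (fun q hq => (hφΔ hq).2) T
  rw [setIntegral_fderiv_emb_crField hQ0 hQ hcol hsub] at hvanTrees
  have hriskInt : IntegrableOn (fun q => (∑ y, (emb a q x - T y) ^ 2 * lik Q y (emb a q)) * f q)
      (stdCorner (a - 1)) :=
    ((continuous_finsetSum _ fun y _ => ((hembx.continuous.sub continuous_const).pow 2).mul
      ((continuous_lik Q y).comp (contDiff_emb a).continuous)).continuousOn.mul
        hf).integrableOn_compact (isCompact_stdCorner _)
  have hrisk := setIntegral_mono_set hriskInt (ae_restrict_of_forall_mem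
    (measurableSet_stdCorner _) fun q hq => mul_nonneg (sum_nonneg fun y _ =>
      mul_nonneg (sq_nonneg _) (prod_nonneg fun i _ => (hp q hq _).le)) (hf0 q)) hsub.eventuallyLE
  refine hvanTrees.trans ?_
  gcongr
  · exact hrisk
  · exact setIntegral_fisherInfo_crField_div_le hQ0 hQ hcol hf hφ.continuous hφΔ hf0 hφf x

end CramerRaoField

section Integration

theorem tendsto_setIntegral_mul_of_abs_le {E : Type*} [NormedAddCommGroup E] [NormedSpace ℝ E]
    [FiniteDimensional ℝ E] [MeasurableSpace E] [BorelSpace E] (ν : Measure E)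
    [ν.IsAddHaarMeasure] {s : Set E} (hs : Convex ℝ s) (hcompact : IsCompact s) {f h : E → ℝ}
    (hf : ContinuousOn f s) (hh : ContinuousOn h s) {φ : ℕ → E → ℝ} (hφ : ∀ k, Continuous (φ k))
    (hφf : ∀ k q, |φ k q| ≤ f q)
    (hlim : ∀ q ∈ interior s, Tendsto (φ · q) atTop (nhds (f q))) :
    Tendsto (fun k => ∫ q in s, φ k q * h q ∂ν) atTop (nhds (∫ q in s, f q * h q ∂ν)) := by
  have hinterior : ∀ᵐ q ∂ν.restrict s, q ∈ interior s := by
    filter_upwards [ae_restrict_mem hcompact.measurableSet,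
      ae_restrict_of_ae (measure_eq_zero_iff_ae_notMem.mp (hs.addHaar_frontier ν))] with q hq hqf
    by_contra hqi
    exact hqf ⟨subset_closure hq, hqi⟩
  refine tendsto_integral_of_dominated_convergence (fun q => f q * |h q|) (fun k => ?_)
    ((hf.mul hh.abs).integrableOn_compact hcompact) (fun k => ?_) ?_
  · exact ((hφ k).continuousOn.mul hh).aestronglyMeasurable hcompact.measurableSet
  · refine Eventually.of_forall fun q => ?_
    rw [norm_mul]
    exact mul_le_mul_of_nonneg_right (hφf k q) (abs_nonneg _)
  · exact hinterior.mono fun q hq => (hlim q hq).mul_const _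

variable {Ω : Type*} [MeasurableSpace Ω] {ν : Measure Ω}

theorem integral_sub_div_sq_mul_le {g w : Ω → ℝ} (hw0 : 0 ≤ᵐ[ν] w) (hw : Integrable w ν)
    (hgw : Integrable (fun ω => g ω * w ω) ν) (hg2w : Integrable (fun ω => g ω ^ 2 * w ω) ν)
    (t : ℝ) :
    ∫ ω, (g ω - (∫ ω, g ω * w ω ∂ν) / ∫ ω, w ω ∂ν) ^ 2 * w ω ∂ν ≤
      ∫ ω, (g ω - t) ^ 2 * w ω ∂ν := by
  have hexpand (s : ℝ) : ∫ ω, (g ω - s) ^ 2 * w ω ∂ν =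
      (∫ ω, g ω ^ 2 * w ω ∂ν) - 2 * s * (∫ ω, g ω * w ω ∂ν) + s ^ 2 * ∫ ω, w ω ∂ν := by
    have hsub : Integrable (fun ω => g ω ^ 2 * w ω - 2 * s * (g ω * w ω)) ν :=
      hg2w.sub (hgw.const_mul _)
    rw [← integral_const_mul, ← integral_const_mul, ← integral_sub hg2w (hgw.const_mul _),
      ← integral_add hsub (hw.const_mul _)]
    congr with ω
    ring
  rw [hexpand, hexpand]
  rcases (integral_nonneg_of_ae hw0).eq_or_lt with hzero | hpos
  · have hgw0 : ∫ ω, g ω * w ω ∂ν = 0 := integral_eq_zero_of_ae <|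
      ((integral_eq_zero_iff_of_nonneg_ae hw0 hw).mp hzero.symm).mono fun ω hω => by simp [hω]
    simp [← hzero, hgw0]
  · set m := ∫ ω, w ω ∂ν
    set c := ∫ ω, g ω * w ω ∂ν
    have hsq : t ^ 2 * m - 2 * t * c - ((c / m) ^ 2 * m - 2 * (c / m) * c) =
        m * (t - c / m) ^ 2 := by
      field_simp
      ring
    have := mul_nonneg hpos.le (sq_nonneg (t - c / m))
    linarith

theorem exp_integral_le_integral [IsProbabilityMeasure ν] {g h : Ω → ℝ} (hg : Integrable g ν)
    (hh : Integrable h ν) (hgh : ∀ᵐ ω ∂ν, exp (g ω) ≤ h ω) :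
    exp (∫ ω, g ω ∂ν) ≤ ∫ ω, h ω ∂ν := by
  set c := ∫ ω, g ω ∂ν
  have htangent : ∫ ω, exp c * (1 - c + g ω) ∂ν = exp c := by
    rw [integral_const_mul, integral_add (integrable_const _) hg]
    simp [c]
  rw [← htangent]
  refine integral_mono_ae (((integrable_const _).add hg).const_mul _) hh (hgh.mono fun ω hω => ?_)
  calc exp c * (1 - c + g ω) ≤ exp c * exp (g ω - c) := by
        gcongr
        linarith [add_one_le_exp (g ω - c)]
    _ = exp (g ω) := by rw [← exp_add, add_sub_cancel]
    _ ≤ h ω := hω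

end Integration

section Prior

variable {a b : ℕ} [NeZero a] {Q : Matrix (Fin b) (Fin a) ℝ} {μ : Measure (Fin a → ℝ)}
  [IsFiniteMeasure μ] {f : (Fin (a - 1) → ℝ) → ℝ}

theorem isCompact_simplex (a : ℕ) : IsCompact (simplex a) := isCompact_stdSimplex ℝ (Fin a)

theorem IsContDensity.ae_mem_simplex (hf : IsContDensity μ f) : ∀ᵐ p ∂μ, p ∈ simplex a := by
  have hm : MeasurableSet (simplex a)ᶜ := (isCompact_simplex a).measurableSet.compl
  have h := hf.2.2.2 ((simplex a)ᶜ.indicator 1) (measurable_one.indicator hm)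
    ⟨1, fun p => by by_cases hp : p ∈ (simplex a)ᶜ <;> simp [hp]⟩
  rw [integral_indicator_one hm, setIntegral_eq_zero_of_forall_eq_zero fun q hq => by
    simp [emb_mem_simplex hq], measureReal_eq_zero_iff] at h
  exact h

theorem IsContDensity.integrable_of_continuousOn (hf : IsContDensity μ f) {g : (Fin a → ℝ) → ℝ}
    (hg : ContinuousOn g (simplex a)) : Integrable g μ := by
  simpa only [IntegrableOn, Measure.restrict_eq_self_of_ae_mem hf.ae_mem_simplex] using
    hg.integrableOn_compact (μ := μ) (isCompact_simplex a)

theorem IsContDensity.integral_eq_setIntegral_emb (hf : IsContDensity μ f)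
    {g : (Fin a → ℝ) → ℝ} (hg : ContinuousOn g (simplex a)) :
    ∫ p, g p ∂μ = ∫ q in stdCorner (a - 1), g (emb a q) * f q := by
  classical
  have hm : MeasurableSet (simplex a) := (isCompact_simplex a).measurableSet
  obtain ⟨C, hC⟩ := (isCompact_simplex a).exists_bound_of_continuousOn hg
  have hbound (p : Fin a → ℝ) : |(simplex a).piecewise g 0 p| ≤ max C 0 := by
    by_cases hp : p ∈ simplex a
    · rw [Set.piecewise_eq_of_mem _ _ _ hp]
      exact (hC p hp).trans (le_max_left _ _)
    · simp [Set.piecewise_eq_of_notMem _ _ _ hp]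
  calc ∫ p, g p ∂μ = ∫ p, (simplex a).piecewise g 0 p ∂μ :=
        integral_congr_ae (hf.ae_mem_simplex.mono fun p hp =>
          (Set.piecewise_eq_of_mem _ _ _ hp).symm)
    _ = ∫ q in stdCorner (a - 1), (simplex a).piecewise g 0 (emb a q) * f q :=
        hf.2.2.2 _ (hg.measurable_piecewise continuousOn_const hm) ⟨_, hbound⟩
    _ = ∫ q in stdCorner (a - 1), g (emb a q) * f q :=
        setIntegral_congr_fun (measurableSet_stdCorner _) fun q hq => by
          simp only [Set.piecewise_eq_of_mem _ _ _ (emb_mem_simplex hq)]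

theorem IsContDensity.integral_trace_Vmat_eq_sum (hf : IsContDensity μ f)
    (hQ0 : ∀ y x, 0 < Q y x) (hQ : Function.Injective (Q *ᵥ ·)) :
    ∫ p, (Vmat Q p).trace ∂μ =
      ∑ x, ∫ q in stdCorner (a - 1), Vmat Q (emb a q) x x * f q := by
  simp only [trace, diag_apply]
  rw [integral_finsetSum _ fun x _ =>
    hf.integrable_of_continuousOn (continuousOn_Vmat_apply hQ0 hQ x x)]
  exact sum_congr rfl fun x _ =>
    hf.integral_eq_setIntegral_emb (continuousOn_Vmat_apply hQ0 hQ x x)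

theorem IsContDensity.MSEdistr_eq_sum_integral (hf : IsContDensity μ f) {n : ℕ}
    (T : (Fin n → Fin b) → Fin a → ℝ) :
    MSEdistr Q μ T = ∑ x, ∫ p, (∑ y, (p x - T y x) ^ 2 * lik Q y p) ∂μ := by
  have hint (y : Fin n → Fin b) (x : Fin a) :
      Integrable (fun p => (p x - T y x) ^ 2 * lik Q y p) μ := by
    have := continuous_lik Q y
    exact hf.integrable_of_continuousOn (by fun_prop)
  simp only [MSEdistr, sum_mul]
  rw [sum_congr rfl fun y _ => integral_finsetSum _ fun x _ => hint y x, sum_comm]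
  exact sum_congr rfl fun x _ => (integral_finsetSum _ fun y _ => hint y x).symm

theorem IsContDensity.MSEdistr_eq_sum_setIntegral_emb (hf : IsContDensity μ f) {n : ℕ}
    (T : (Fin n → Fin b) → Fin a → ℝ) :
    MSEdistr Q μ T = ∑ x, ∫ q in stdCorner (a - 1),
      (∑ y, (emb a q x - T y x) ^ 2 * lik Q y (emb a q)) * f q := by
  rw [hf.MSEdistr_eq_sum_integral]
  have (y : Fin n → Fin b) := continuous_lik Q y
  exact sum_congr rfl fun x _ => hf.integral_eq_setIntegral_emb (by fun_prop)

end Prior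

section LowerBound

variable {a b : ℕ} [NeZero a] {Q : Matrix (Fin b) (Fin a) ℝ} {μ : Measure (Fin a → ℝ)}
  [IsFiniteMeasure μ] {f φ : (Fin (a - 1) → ℝ) → ℝ}

theorem exists_two_mul_sum_setIntegral_mul_Vmat_le (hQ0 : ∀ y x, 0 < Q y x)
    (hQ : Function.Injective (Q *ᵥ ·)) (hcol : ∀ x, ∑ y, Q y x = 1) (hf : IsContDensity μ f)
    (hφ : ContDiff ℝ 1 φ) (hφΔ : tsupport φ ⊆ stdCorner (a - 1) ∩ {q | 0 < f q})
    (hφf : ∀ q, |φ q| ≤ f q) :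
    ∃ C : ℝ, ∀ n > 0, ∀ T : (Fin n → Fin b) → Fin a → ℝ,
      2 * ∑ x, ∫ q in stdCorner (a - 1), φ q * Vmat Q (emb a q) x x ≤
        n * MSEdistr Q μ T + ∫ p, (Vmat Q p).trace ∂μ + C / n := by
  choose C hC using exists_two_mul_setIntegral_mul_Vmat_le hQ0 hQ hcol hf.1 hf.2.1 hφ hφΔ hφf
  refine ⟨∑ x, C x, fun n hn T => ?_⟩
  rw [hf.MSEdistr_eq_sum_setIntegral_emb, hf.integral_trace_Vmat_eq_sum hQ0 hQ]
  simp only [mul_sum, sum_div, ← sum_add_distrib]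
  exact sum_le_sum fun x _ => hC x n hn fun y => T y x

theorem integral_trace_Vmat_le_liminf_mul_MSEdistr (hQ0 : ∀ y x, 0 < Q y x)
    (hQ : Function.Injective (Q *ᵥ ·)) (hcol : ∀ x, ∑ y, Q y x = 1) (hf : IsContDensity μ f)
    (T : ∀ n : ℕ, (Fin n → Fin b) → Fin a → ℝ)
    (hT : IsCoboundedUnder (· ≥ ·) atTop fun n : ℕ => n * MSEdistr Q μ (T n)) :
    ∫ p, (Vmat Q p).trace ∂μ ≤ liminf (fun n : ℕ => n * MSEdistr Q μ (T n)) atTop := by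
  obtain ⟨φ, hφ, hφU, hφf, hφlim⟩ := exists_contDiff_seq_abs_le_tendsto 1
    isOpen_interior (hf.1.mono interior_subset) hf.2.1
  have hconv : Tendsto (fun k => ∑ x, ∫ q in stdCorner (a - 1), φ k q * Vmat Q (emb a q) x x)
      atTop (nhds (∫ p, (Vmat Q p).trace ∂μ)) := by
    simp only [hf.integral_trace_Vmat_eq_sum hQ0 hQ, mul_comm _ (f _)]
    exact tendsto_finsetSum _ fun x _ => tendsto_setIntegral_mul_of_abs_le volume
      (convex_stdCorner _) (isCompact_stdCorner _) hf.1 (continuousOn_Vmat_emb hQ0 hQ x)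
      (fun k => (hφ k).continuous) hφf hφlim
  have hlim := ((hconv.const_mul 2).sub_const (∫ p, (Vmat Q p).trace ∂μ))
  rw [two_mul, add_sub_cancel_right] at hlim
  refine le_of_tendsto' hlim fun k => ?_
  obtain ⟨C, hC⟩ := exists_two_mul_sum_setIntegral_mul_Vmat_le hQ0 hQ hcol hf (hφ k)
    ((hφU k).trans (Set.inter_subset_inter_left _ interior_subset)) (hφf k)
  have herror := (tendsto_const_div_atTop_nhds_zero_nat C).const_sub
    ((2 * ∑ x, ∫ q in stdCorner (a - 1), φ k q * Vmat Q (emb a q) x x) -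
      ∫ p, (Vmat Q p).trace ∂μ)
  rw [sub_zero] at herror
  rw [← herror.liminf_eq]
  refine liminf_le_liminf ((eventually_gt_atTop 0).mono fun n hn => ?_)
    herror.isBoundedUnder_ge hT
  linarith [hC n hn (T n)]

end LowerBound

section UpperBound

variable {a b : ℕ} [NeZero a] {Q : Matrix (Fin b) (Fin a) ℝ} {μ : Measure (Fin a → ℝ)}
  [IsFiniteMeasure μ] {f : (Fin (a - 1) → ℝ) → ℝ}

theorem MSEdistr_PiOpt_le (hQ0 : ∀ y x, 0 < Q y x) (hf : IsContDensity μ f) {n : ℕ}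
    (T : (Fin n → Fin b) → Fin a → ℝ) : MSEdistr (n := n) Q μ (PiOpt Q μ) ≤ MSEdistr Q μ T := by
  have hcont (y : Fin n → Fin b) := continuous_lik Q y
  have hlik (y : Fin n → Fin b) : 0 ≤ᵐ[μ] lik Q y := hf.ae_mem_simplex.mono fun p hp =>
    prod_nonneg fun i _ => (mulVec_pos_of_mem_simplex hQ0 hp _).le
  simp only [MSEdistr, sum_mul]
  refine sum_le_sum fun y _ => ?_
  rw [integral_finsetSum _ fun x _ => hf.integrable_of_continuousOn (by fun_prop),
    integral_finsetSum _ fun x _ => hf.integrable_of_continuousOn (by fun_prop)]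
  exact sum_le_sum fun x _ => integral_sub_div_sq_mul_le (hlik y)
    (hf.integrable_of_continuousOn (by fun_prop)) (hf.integrable_of_continuousOn (by fun_prop))
    (hf.integrable_of_continuousOn (by fun_prop)) (T y x)

theorem exists_mul_MSEdistr_PiOpt_le (hQ0 : ∀ y x, 0 < Q y x)
    (hQ : Function.Injective (Q *ᵥ ·)) (hcol : ∀ x, ∑ y, Q y x = 1) (hf : IsContDensity μ f) :
    ∃ C : ℝ, ∀ n > 0, n * MSEdistr (n := n) Q μ (PiOpt Q μ) ≤ C := by
  obtain ⟨R, hR⟩ := exists_mul_eq_one_of_mulVec_injective hQ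
  refine ⟨∑ x, ∫ p, (∑ z, (Q *ᵥ p) z * (R x z - p x) ^ 2) ∂μ, fun n hn => ?_⟩
  calc n * MSEdistr (n := n) Q μ (PiOpt Q μ)
      ≤ n * MSEdistr Q μ fun (y : Fin n → Fin b) x => (∑ i, R x (y i)) / n := by
        gcongr
        exact MSEdistr_PiOpt_le hQ0 hf _
    _ = ∑ x, ∫ p, (∑ z, (Q *ᵥ p) z * (R x z - p x) ^ 2) ∂μ := by
        rw [hf.MSEdistr_eq_sum_integral, mul_sum]
        refine sum_congr rfl fun x _ => ?_
        rw [← integral_const_mul]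
        refine integral_congr_ae (hf.ae_mem_simplex.mono fun p hp => ?_)
        have hunbiased : ∑ z, (Q *ᵥ p) z * R x z = p x := by
          have hRQp : R *ᵥ Q *ᵥ p = p := by rw [mulVec_mulVec, hR, one_mulVec]
          simpa only [mulVec, dotProduct, mul_comm] using congrFun hRQp x
        exact mul_sum_sub_average_sq_mul_prod ((sum_mulVec_eq_sum hcol p).trans hp.2)
          hunbiased hn

end UpperBound

section Entropy

variable {a b : ℕ} {Q : Matrix (Fin b) (Fin a) ℝ} {μ : Measure (Fin a → ℝ)}

theorem exp_mul_gammaMu_eq (ha : 2 ≤ a) :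
    (a : ℝ) / (2 * π * exp 1) * exp ((2 / ((a : ℝ) - 1)) * gammaMu Q μ) =
      a * exp (∫ p, -(1 / ((a : ℝ) - 1) * log (Dmat Q p).det) ∂μ) := by
  have ha1 : (a : ℝ) - 1 ≠ 0 := by
    have : (2 : ℝ) ≤ a := mod_cast ha
    linarith
  have hexponent : (2 / ((a : ℝ) - 1)) * gammaMu Q μ =
      log (2 * π * exp 1) + ∫ p, -(1 / ((a : ℝ) - 1) * log (Dmat Q p).det) ∂μ := by
    rw [gammaMu, integral_neg, integral_const_mul]
    field_simp
    ring
  rw [hexponent, exp_add, exp_log (by positivity)]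
  field_simp

theorem gamma_bound_le_integral_trace_Vmat [NeZero a] [IsProbabilityMeasure μ] (ha : 2 ≤ a)
    (hQ0 : ∀ y x, 0 < Q y x) (hQ : Function.Injective (Q *ᵥ ·)) (hcol : ∀ x, ∑ y, Q y x = 1)
    {f : (Fin (a - 1) → ℝ) → ℝ} (hf : IsContDensity μ f)
    (hint : Integrable (fun p => log (Dmat Q p).det) μ) :
    (a : ℝ) / (2 * π * exp 1) * exp ((2 / ((a : ℝ) - 1)) * gammaMu Q μ) ≤
      ∫ p, (Vmat Q p).trace ∂μ := by
  have ha0 : (0 : ℝ) < a := mod_cast NeZero.pos a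
  have htrace : Integrable (fun p => (Vmat Q p).trace) μ :=
    hf.integrable_of_continuousOn <| continuousOn_finsetSum _ fun x _ =>
      continuousOn_Vmat_apply hQ0 hQ x x
  rw [exp_mul_gammaMu_eq ha, ← le_div_iff₀' ha0, ← integral_div]
  refine exp_integral_le_integral (hint.const_mul _).neg (htrace.div_const _)
    (hf.ae_mem_simplex.mono fun p hp => ?_)
  rw [le_div_iff₀' ha0]
  exact mul_exp_neg_log_det_le_trace_Vmat ha hQ hcol (mulVec_pos_of_mem_simplex hQ0 hp) hp.2

end Entropy

/-- asymptotic lower bound on `n · MSE^distr` in terms of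
`γ_μ(Q)`. -/
theorem liminf_MSEdistr_ge_gamma_bound {a b : ℕ} (ha : 2 ≤ a) (hb : 2 ≤ b)
    (Q : Matrix (Fin b) (Fin a) ℝ)
    (hQpos : ∀ y x, 0 < Q y x) (hQcol : ∀ x, ∑ y, Q y x = 1)
    (μ : Measure (Fin a → ℝ)) [IsProbabilityMeasure μ]
    (hrank : Q.rank = a)
    (f : (Fin (a - 1) → ℝ) → ℝ) (hf : IsContDensity μ f)
    (hint : Integrable (fun p => Real.log (Dmat Q p).det) μ) :
    (a : ℝ) / (2 * π * Real.exp 1) * Real.exp ((2 / ((a : ℝ) - 1)) * gammaMu Q μ) ≤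
      Filter.liminf (fun n : ℕ => (n : ℝ) * MSEdistr (n := n) Q μ (PiOpt Q μ))
        Filter.atTop := by
  have : NeZero a := ⟨by omega⟩
  have hQ : Function.Injective (Q *ᵥ ·) := mulVec_injective_of_rank_eq_card (by simpa using hrank)
  obtain ⟨C, hC⟩ := exists_mul_MSEdistr_PiOpt_le hQpos hQ hQcol hf
  -- A `liminf` in `ℝ` takes a junk value for a sequence that tends to `+∞`.
  have hcobounded : IsCoboundedUnder (· ≥ ·) atTop
      fun n : ℕ => (n : ℝ) * MSEdistr (n := n) Q μ (PiOpt Q μ) :=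
    IsBoundedUnder.isCoboundedUnder_ge
      ⟨C, eventually_map.mpr ((eventually_gt_atTop 0).mono hC)⟩
  exact (gamma_bound_le_integral_trace_Vmat ha hQpos hQ hQcol hf hint).trans
    (integral_trace_Vmat_le_liminf_mul_MSEdistr hQpos hQ hQcol hf (fun _ => PiOpt Q μ) hcobounded)

end
end

section
/- Let ε > 0 and let Q be a privacy protocol satisfying ε-LDP all of whose entries are positive. Then for every p in the simplex 𝒫 one has log det G_p ≥ −b·ε + Σ_{y=1}^b log((Qp)_y), where G_p = Σ_{x=1}^a p_x E_x with E_x = diag(w_x) − w_x w_xᵀ and w_x = (Q_{1|x},…,Q_{b−1|x})ᵀ. -/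
/-! Write `q = Qp`. The matrix `E_x` is the covariance matrix of the indicators of the first
`b - 1` outcomes under `Q_{·|x}`, so its quadratic form at `v` is the variance of `(v, 0)`. A
variance is a minimum of mean square deviations, hence monotone in the weights. By `ε`-LDP,
`Q_{y|x} ≥ e^{-ε} q_y`, so `E_x ≥ e^{-ε} E_q` in the Loewner order, where `E_q` is the analogous
matrix for `q`, and averaging over `p` gives `G_p ≥ e^{-ε} E_q`. Since the determinant is monotone
on positive semidefinite matrices and `det E_q = ∏ y, q_y`, we get
`det G_p ≥ e^{-(b-1)ε} ∏ y, q_y`. -/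

open MeasureTheory Matrix Finset Filter Real

noncomputable section

section Determinant

variable {n : Type*} [Fintype n] [DecidableEq n]

lemma det_diagonal_sub_vecMulVec {R : Type*} [CommRing R] (w v : n → R) :
    (diagonal w - vecMulVec w v).det = (∏ i, w i) * (1 - ∑ i, v i) := by
  have hfactor : diagonal w - vecMulVec w v = diagonal w * (1 - vecMulVec 1 v) := by
    have hw : diagonal w *ᵥ 1 = w := by ext i; simp [mulVec_diagonal]
    rw [mul_sub, mul_one, mul_vecMulVec, hw]
  rw [hfactor, det_mul, det_diagonal, vecMulVec_eq Unit, det_one_sub_mul_comm, det_unique]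
  simp [dotProduct_one]

open scoped MatrixOrder ComplexOrder

variable {𝕜 : Type*} [RCLike 𝕜]

lemma one_le_det_one_add {P : Matrix n n 𝕜} (hP : 0 ≤ P) : 1 ≤ (1 + P).det := by
  have hPsd := hP.posSemidef
  have hdet : (1 + P).det = ∏ i, (1 + (hPsd.1.eigenvalues i : 𝕜)) := by
    conv_lhs =>
      rw [hPsd.1.spectral_theorem, Unitary.conjStarAlgAut_apply, det_one_add_mul_comm,
        ← mul_assoc, Unitary.coe_star_mul_self, one_mul, ← diagonal_one, diagonal_add,
        det_diagonal]
    rfl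
  rw [hdet]
  exact Finset.one_le_prod fun i _ =>
    le_add_of_nonneg_right (RCLike.ofReal_nonneg.mpr (hPsd.eigenvalues_nonneg i))

theorem det_le_det_of_nonneg_of_le {A B : Matrix n n 𝕜} (hA : 0 ≤ A) (hAB : A ≤ B) :
    A.det ≤ B.det := by
  by_cases hdet : A.det = 0
  · exact hdet.trans_le (hA.trans hAB).posSemidef.det_nonneg
  -- With `B - A = Cᴴ C`, one has `det B = det A * det (1 + C A⁻¹ Cᴴ)`.
  obtain ⟨C, hC⟩ := CStarAlgebra.nonneg_iff_eq_star_mul_self.mp (sub_nonneg.mpr hAB)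
  rw [← add_sub_cancel A B, hC, det_add_mul _ _ (Ne.isUnit hdet)]
  exact le_mul_of_one_le_right hA.posSemidef.det_nonneg
    (one_le_det_one_add (hA.posSemidef.inv.mul_mul_conjTranspose_same C).nonneg)

end Determinant

section MultinomialCov

open scoped MatrixOrder

variable {n : Type*} [DecidableEq n]

/-- The covariance matrix of the indicators of all outcomes but one of a single categorical trial.
The vector `w` lists the probabilities of the outcomes that are kept; the omitted outcome has
probability `1 - ∑ i, w i`. Thus `Emat Q x` is `multinomialCov (wcol Q x)`. -/
def multinomialCov (w : n → ℝ) : Matrix n n ℝ :=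
  diagonal w - vecMulVec w w

lemma isHermitian_multinomialCov (w : n → ℝ) : (multinomialCov w).IsHermitian :=
  (isHermitian_diagonal w).sub (by rw [IsHermitian, conjTranspose_vecMulVec, star_trivial])

variable [Fintype n]

-- The right side is the mean square deviation of `(v, 0)` from `c`, minus the squared bias of `c`.
lemma dotProduct_multinomialCov_mulVec (w v : n → ℝ) (c : ℝ) :
    v ⬝ᵥ (multinomialCov w *ᵥ v) =
      ∑ i, w i * (v i - c) ^ 2 + (1 - ∑ i, w i) * c ^ 2 - (∑ i, w i * v i - c) ^ 2 := by
  have hform : v ⬝ᵥ (multinomialCov w *ᵥ v) = ∑ i, w i * v i ^ 2 - (∑ i, w i * v i) ^ 2 := by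
    rw [multinomialCov, sub_mulVec, vecMulVec_mulVec, dotProduct_sub, op_smul_eq_smul,
      dotProduct_smul, smul_eq_mul, dotProduct_comm v w, sq, dotProduct, dotProduct]
    simp only [mulVec_diagonal, mul_left_comm, sq]
  have hexpand : ∑ i, w i * (v i - c) ^ 2 =
      ∑ i, w i * v i ^ 2 - 2 * c * ∑ i, w i * v i + c ^ 2 * ∑ i, w i := by
    simp only [mul_sum, ← sum_sub_distrib, ← sum_add_distrib]
    exact sum_congr rfl fun i _ => by ring
  rw [hform, hexpand]
  ring

theorem smul_multinomialCov_le_multinomialCov {w q : n → ℝ} {t : ℝ} (ht : 0 ≤ t)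
    (hle : ∀ i, t * q i ≤ w i) (hlast : t * (1 - ∑ i, q i) ≤ 1 - ∑ i, w i) :
    t • multinomialCov q ≤ multinomialCov w := by
  refine le_iff.mpr (.of_dotProduct_mulVec_nonneg ((isHermitian_multinomialCov w).sub
    ((isHermitian_multinomialCov q).smul (.all t))) fun v => ?_)
  rw [star_trivial, sub_mulVec, dotProduct_sub, smul_mulVec, dotProduct_smul, smul_eq_mul,
    sub_nonneg]
  -- Measure both deviations from the mean of `(v, 0)` under `w`.
  set c := ∑ i, w i * v i with hc
  calc t * (v ⬝ᵥ (multinomialCov q *ᵥ v))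
      ≤ t * (∑ i, q i * (v i - c) ^ 2 + (1 - ∑ i, q i) * c ^ 2) := by
        rw [dotProduct_multinomialCov_mulVec q v c]
        gcongr
        exact sub_le_self _ (sq_nonneg _)
    _ = ∑ i, t * q i * (v i - c) ^ 2 + t * (1 - ∑ i, q i) * c ^ 2 := by
        simp only [mul_add, mul_sum, mul_assoc]
    _ ≤ ∑ i, w i * (v i - c) ^ 2 + (1 - ∑ i, w i) * c ^ 2 := by
        gcongr
        exact hle _
    _ = v ⬝ᵥ (multinomialCov w *ᵥ v) := by
        rw [dotProduct_multinomialCov_mulVec w v c, ← hc, sub_self]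
        ring

lemma multinomialCov_nonneg {w : n → ℝ} (hw : ∀ i, 0 ≤ w i) (hsum : ∑ i, w i ≤ 1) :
    0 ≤ multinomialCov w := by
  simpa using smul_multinomialCov_le_multinomialCov (q := w) le_rfl
    (by simpa using hw) (by simpa using hsum)

end MultinomialCov

section Truncation

lemma one_sub_sum_init {R : Type*} [AddCommGroupWithOne R] {m : ℕ} {f : Fin (m + 1) → R}
    (hf : ∑ y, f y = 1) : 1 - ∑ i, Fin.init (α := fun _ => R) f i = f (Fin.last m) := by
  rw [← hf, Fin.sum_univ_castSucc]
  exact add_sub_cancel_left _ _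

open scoped MatrixOrder

variable {m : ℕ} {f g : Fin (m + 1) → ℝ}

lemma det_multinomialCov_init (hf : ∑ y, f y = 1) :
    (multinomialCov (Fin.init f)).det = ∏ y, f y := by
  rw [multinomialCov, det_diagonal_sub_vecMulVec, one_sub_sum_init hf, Fin.prod_univ_castSucc]
  rfl

lemma multinomialCov_init_nonneg (hf : f ∈ stdSimplex ℝ (Fin (m + 1))) :
    0 ≤ multinomialCov (Fin.init f) :=
  multinomialCov_nonneg (fun _ => hf.1 _)
    (sub_nonneg.mp ((hf.1 _).trans_eq (one_sub_sum_init hf.2).symm))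

lemma smul_multinomialCov_init_le {t : ℝ} (ht : 0 ≤ t) (hf : ∑ y, f y = 1) (hg : ∑ y, g y = 1)
    (hle : ∀ y, t * g y ≤ f y) :
    t • multinomialCov (Fin.init g) ≤ multinomialCov (Fin.init f) :=
  smul_multinomialCov_le_multinomialCov ht (fun _ => hle _)
    (by simpa only [one_sub_sum_init hf, one_sub_sum_init hg] using hle (Fin.last m))

end Truncation

section OutputDistribution

variable {m n R : Type*} [Fintype n] {Q : Matrix m n R} {p : n → R}

lemma mulVec_mem_of_convex [Field R] [LinearOrder R] [IsStrictOrderedRing R] {s : Set R}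
    (hs : Convex R s) (hp : p ∈ stdSimplex R n) {y : m} (hQ : ∀ x, Q y x ∈ s) :
    (Q *ᵥ p) y ∈ s := by
  have hmem : ∑ x, p x • Q y x ∈ s := hs.sum_mem (fun x _ => hp.1 x) hp.2 fun x _ => hQ x
  simpa only [mulVec, dotProduct, smul_eq_mul, mul_comm] using hmem

variable [Fintype m]

lemma sum_mulVec_eq_sum_s14 [NonAssocSemiring R] (hQcol : ∀ x, ∑ y, Q y x = 1) :
    ∑ y, (Q *ᵥ p) y = ∑ x, p x := by
  simp only [mulVec, dotProduct]
  rw [sum_comm]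
  simp only [← sum_mul, hQcol, one_mul]

lemma mulVec_mem_stdSimplex [Semiring R] [PartialOrder R] [IsOrderedRing R]
    (hQ : ∀ y x, 0 ≤ Q y x) (hQcol : ∀ x, ∑ y, Q y x = 1) (hp : p ∈ stdSimplex R n) :
    Q *ᵥ p ∈ stdSimplex R m :=
  ⟨fun y => sum_nonneg fun x _ => mul_nonneg (hQ y x) (hp.1 x),
    (sum_mulVec_eq_sum_s14 hQcol).trans hp.2⟩

end OutputDistribution

namespace SatisfiesLDP

open scoped MatrixOrder

variable {a b m : ℕ} {ε : ℝ} {p : Fin a → ℝ}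

lemma exp_neg_mul_mulVec_le {Q : Matrix (Fin b) (Fin a) ℝ} (hLDP : SatisfiesLDP Q ε)
    (hp : p ∈ simplex a) (y : Fin b) (x : Fin a) :
    Real.exp (-ε) * (Q *ᵥ p) y ≤ Q y x := by
  rw [Real.exp_neg, inv_mul_le_iff₀ (Real.exp_pos ε)]
  exact mulVec_mem_of_convex (convex_Iic _) hp fun x' => hLDP x x' y

theorem smul_multinomialCov_le_Gmat {Q : Matrix (Fin (m + 1)) (Fin a) ℝ}
    (hLDP : SatisfiesLDP Q ε) (hQcol : ∀ x, ∑ y, Q y x = 1) (hp : p ∈ simplex a) :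
    Real.exp (-ε) • multinomialCov (Fin.init (Q *ᵥ p)) ≤ Gmat Q p := by
  -- The index type `Fin (m + 1 - 1)` of `Emat` and `Gmat` is read as `Fin m`.
  have hE : ∀ x, Real.exp (-ε) • multinomialCov (Fin.init (Q *ᵥ p)) ≤ Emat Q x := fun x =>
    smul_multinomialCov_init_le (f := fun y => Q y x) (Real.exp_pos _).le (hQcol x)
      ((sum_mulVec_eq_sum_s14 hQcol).trans hp.2) fun y => hLDP.exp_neg_mul_mulVec_le hp y x
  exact Set.mem_Ici.mp ((convex_Ici _).sum_mem (fun x _ => hp.1 x) hp.2 fun x _ => hE x)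

theorem exp_neg_pow_mul_prod_le_det_Gmat {Q : Matrix (Fin b) (Fin a) ℝ}
    (hLDP : SatisfiesLDP Q ε) (hQ : ∀ y x, 0 ≤ Q y x) (hQcol : ∀ x, ∑ y, Q y x = 1)
    (hp : p ∈ simplex a) :
    Real.exp (-ε) ^ (b - 1) * ∏ y, (Q *ᵥ p) y ≤ (Gmat Q p).det := by
  obtain _ | m := b
  · simp
  have hq := mulVec_mem_stdSimplex hQ hQcol hp
  calc Real.exp (-ε) ^ m * ∏ y, (Q *ᵥ p) y
      = (Real.exp (-ε) • multinomialCov (Fin.init (Q *ᵥ p))).det := by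
        rw [det_smul, Fintype.card_fin, det_multinomialCov_init hq.2]
    _ ≤ (Gmat Q p).det :=
        det_le_det_of_nonneg_of_le
          (smul_nonneg (Real.exp_pos _).le (multinomialCov_init_nonneg hq))
          (hLDP.smul_multinomialCov_le_Gmat hQcol hp)

end SatisfiesLDP

theorem log_det_Gmat_ge_general {a b : ℕ} {ε : ℝ} {Q : Matrix (Fin b) (Fin a) ℝ}
    (hQpos : ∀ y x, 0 < Q y x) (hQcol : ∀ x, ∑ y, Q y x = 1) (hLDP : SatisfiesLDP Q ε)
    {p : Fin a → ℝ} (hp : p ∈ simplex a) :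
    -((b - 1 : ℕ) : ℝ) * ε + ∑ y, Real.log (Q.mulVec p y) ≤ Real.log (Gmat Q p).det := by
  have hq : ∀ y, 0 < (Q *ᵥ p) y := fun y => mulVec_mem_of_convex (convex_Ioi 0) hp (hQpos y)
  have hprod : 0 < ∏ y, (Q *ᵥ p) y := prod_pos fun y _ => hq y
  have hexp : 0 < Real.exp (-ε) ^ (b - 1) := pow_pos (Real.exp_pos _) _
  calc -((b - 1 : ℕ) : ℝ) * ε + ∑ y, Real.log ((Q *ᵥ p) y)
      = Real.log (Real.exp (-ε) ^ (b - 1) * ∏ y, (Q *ᵥ p) y) := by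
        rw [Real.log_mul hexp.ne' hprod.ne', Real.log_pow, Real.log_exp,
          Real.log_prod fun y _ => (hq y).ne', neg_mul_comm]
    _ ≤ Real.log (Gmat Q p).det :=
        Real.log_le_log (mul_pos hexp hprod)
          (hLDP.exp_neg_pow_mul_prod_le_det_Gmat (fun y x => (hQpos y x).le) hQcol hp)

/-- pointwise lower bound on `log det G_p` from `ε`-LDP. -/
theorem log_det_Gmat_ge {a b : ℕ} (ha : 2 ≤ a) (hb : 2 ≤ b)
    (ε : ℝ) (hε : 0 < ε)
    (Q : Matrix (Fin b) (Fin a) ℝ)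
    (hQpos : ∀ y x, 0 < Q y x) (hQcol : ∀ x, ∑ y, Q y x = 1)
    (hLDP : SatisfiesLDP Q ε) :
    ∀ p ∈ simplex a,
      -(b : ℝ) * ε + ∑ y, Real.log (Q.mulVec p y) ≤ Real.log (Gmat Q p).det := by
  intro p hp
  refine le_trans ?_ (log_det_Gmat_ge_general hQpos hQcol hLDP hp)
  gcongr
  exact Nat.sub_le b 1

end
end
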